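/- arXiv:2005.05253 — 2 statements merged into one kernel-verified Lean document; each statement's English description precedes it below -/
import Mathlib

section
/- For any graphon w, Γ̃(w) = 0 if and only if w is Robinsonian; that is, inf{Γ(u) : δ_□(u,w) = 0} equals 0 exactly when there exists a Robinson graphon u with δ_□(u,w) = 0 (and in that case the infimum is attained). -/
/-!
If `u` is Robinson, every inner integral in the definition of `Γ(u, A)` is nonpositive, so `Γ(u) = 0`;
hence `Γ̃(w) = 0`, and the infimum is attained, as soon as `w` is at cut distance `0` from a Robinson
graphon.

Conversely, let `Γ̃(w) = 0` and choose graphons `vₙ` at cut distance `0` from `w` with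
`Γ(vₙ) ≤ (n + 1)⁻⁴`. The idea is to replace `vₙ` by its block averages on the grid of mesh
`1 / (n + 1)`, with the value `1` on the diagonal blocks (`stepKernel`), and to pass to the limit.

* For `A < Y < Z` the average over `y ∈ Y` of `∫_A v(x, y) dx` is almost at least the one over `Z`,
  with an error controlled by `Γ(v)` (`rectInt_right`, and symmetrically `rectInt_left`). Taking for
  `A`, `Y`, `Z` the blocks themselves, the step kernel on a grid of `k` cells is Robinson up to
  `k³ Γ(v)` (`stepKernel_robinson`).
* For a fixed `A`, an almost decreasing function is close to its block averages in the sense of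
  integrals over subsets: its deviations on the successive blocks telescope (`sum_deviation_le`).
  Applied in each variable in turn, this bounds the cut-norm distance between `v` and its step kernel
  by `9 / k + 16 k³ Γ(v)` (`rectInt_sub_stepKernel_le`).
* Almost Robinson kernels have an almost everywhere convergent subsequence with a Robinson limit
  (`exists_subseq_tendsto`): after a diagonal extraction the pointwise `liminf` and `limsup` agree at
  rational pairs; both are monotone in each variable away from the diagonal, so they agree off a null
  set, and the `limsup` is Robinson. By dominated convergence the limit `u` is also a cut-norm
  accumulation point of `vₙ` (`exists_robinson_limit`).
* Measure-preserving bijections of `[0,1]` carry measurable rectangles to measurable rectangles, so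
  `δ_□(vₙ, w) = 0` passes to the limit and `δ_□(u, w) = 0` (`cutDist_eq_zero_of_limit`).
-/

open MeasureTheory Set Filter

/-- The cut norm of a kernel `w` on `[0,1]²`. -/
noncomputable def cutNorm (w : ℝ → ℝ → ℝ) : ℝ :=
  sSup {r : ℝ | ∃ S T : Set ℝ, MeasurableSet S ∧ MeasurableSet T ∧
    S ⊆ Icc 0 1 ∧ T ⊆ Icc 0 1 ∧ r = |∫ x in S, ∫ y in T, w x y|}

/-- The cut distance `δ_□(u,w) = inf_φ ‖u^φ − w‖_□`, the infimum being over
measure-preserving bijections `φ` of `[0,1]`. -/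
noncomputable def cutDist (u w : ℝ → ℝ → ℝ) : ℝ :=
  sInf {r : ℝ | ∃ φ : ℝ → ℝ,
    MeasurePreserving φ (volume.restrict (Icc 0 1)) (volume.restrict (Icc 0 1)) ∧
    Set.BijOn φ (Icc 0 1) (Icc 0 1) ∧
    r = cutNorm (fun x y => u (φ x) (φ y) - w x y)}

/-- `Γ(w, A)`. -/
noncomputable def gammaA (w : ℝ → ℝ → ℝ) (A : Set ℝ) : ℝ :=
  ∫ y in Icc (0:ℝ) 1, ∫ z in Icc (0:ℝ) 1,
    if y < z then
      max (∫ x in A ∩ Icc 0 y, (w x z - w x y)) 0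
        + max (∫ x in A ∩ Icc z 1, (w x y - w x z)) 0
    else 0

/-- `Γ(w) = sup { Γ(w,A) : A ⊆ [0,1] measurable }`. -/
noncomputable def Gamma (w : ℝ → ℝ → ℝ) : ℝ :=
  sSup {r : ℝ | ∃ A : Set ℝ, MeasurableSet A ∧ A ⊆ Icc 0 1 ∧ r = gammaA w A}

/-- A graphon: symmetric, measurable, `[0,1]`-valued on `[0,1]²`. -/
def IsGraphon (w : ℝ → ℝ → ℝ) : Prop :=
  Measurable (Function.uncurry w) ∧ (∀ x y, w x y = w y x) ∧
    ∀ x y : ℝ, x ∈ Icc (0:ℝ) 1 → y ∈ Icc (0:ℝ) 1 → w x y ∈ Icc (0:ℝ) 1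

/-- The Robinson property. -/
def IsRobinson (w : ℝ → ℝ → ℝ) : Prop :=
  ∀ x y z : ℝ, 0 ≤ x → x ≤ y → y ≤ z → z ≤ 1 → w x z ≤ min (w x y) (w y z)

/-- A finite labeled graph, given by a symmetric loopless boolean adjacency matrix. -/
structure FinGraph where
  n : ℕ
  adj : Fin n → Fin n → Bool
  symm : ∀ i j, adj i j = adj j i
  loopless : ∀ i, adj i i = false

/-- The index of the subinterval `((i-1)/n, i/n]` containing `x`, as a natural number
(zero-based). -/
noncomputable def vertexOf (n : ℕ) (x : ℝ) : ℕ := (⌈(n : ℝ) * x⌉ - 1).toNat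

/-- The step graphon `w_G` associated with the adjacency matrix of a labeled graph:
it takes the value `A_{ij}` on the cell `I_i × I_j`. -/
noncomputable def graphStep (G : FinGraph) (x y : ℝ) : ℝ :=
  if h : vertexOf G.n x < G.n ∧ vertexOf G.n y < G.n then
    (if G.adj ⟨vertexOf G.n x, h.1⟩ ⟨vertexOf G.n y, h.2⟩ then 1 else 0)
  else 0

/-- `Γ̃(w) = inf { Γ(u) : δ_□(u,w) = 0 }`. -/
noncomputable def gammaTilde (w : ℝ → ℝ → ℝ) : ℝ :=
  sInf {r : ℝ | ∃ u : ℝ → ℝ → ℝ, IsGraphon u ∧ cutDist u w = 0 ∧ r = Gamma u}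

/-! ### Bounded kernels and rectangle integrals -/

/-- A kernel which is measurable, symmetric and `[0,1]`-valued on all of `ℝ²`.  Asking for the bounds
everywhere, and not only on the unit square, makes every integral below an integral of a bounded
function. -/
structure BddKernel (u : ℝ → ℝ → ℝ) : Prop where
  meas : Measurable (Function.uncurry u)
  symm : ∀ x y, u x y = u y x
  nonneg : ∀ x y, 0 ≤ u x y
  le_one : ∀ x y, u x y ≤ 1

/-- The integral of `u` over the rectangle `S × T`. -/
noncomputable def rectInt (u : ℝ → ℝ → ℝ) (S T : Set ℝ) : ℝ := ∫ x in S, ∫ y in T, u x y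

lemma BddKernel.isGraphon {u : ℝ → ℝ → ℝ} (hu : BddKernel u) : IsGraphon u :=
  ⟨hu.meas, hu.symm, fun x y _ _ => ⟨hu.nonneg x y, hu.le_one x y⟩⟩

lemma finite_restrict {S : Set ℝ} (hS : S ⊆ Icc 0 1) : IsFiniteMeasure (volume.restrict S) := by
  constructor
  rw [Measure.restrict_apply_univ]
  exact (measure_mono hS).trans_lt (by simp)

lemma volReal_le_one {S : Set ℝ} (hS : S ⊆ Icc 0 1) : volume.real S ≤ 1 := by
  have := measureReal_mono (μ := volume) hS (by simp)
  simpa using this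

lemma volume_lt_top {S : Set ℝ} (hS : S ⊆ Icc 0 1) : volume S < ⊤ :=
  (measure_mono hS).trans_lt (by simp)

/-- A measurable function of two variables, bounded by `C`, is integrable on rectangles inside the
unit square. -/
lemma integrable_prod_of_bdd {f : ℝ → ℝ → ℝ} (hf : Measurable (Function.uncurry f)) (C : ℝ)
    (hC : ∀ x y, |f x y| ≤ C) {S T : Set ℝ} (hS : S ⊆ Icc 0 1) (hT : T ⊆ Icc 0 1) :
    Integrable (Function.uncurry f) ((volume.restrict S).prod (volume.restrict T)) := by
  have := finite_restrict hS
  have := finite_restrict hT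
  exact Integrable.of_bound hf.aestronglyMeasurable C (Eventually.of_forall fun p => hC p.1 p.2)

lemma integrableOn_of_bdd {f : ℝ → ℝ} (hf : Measurable f) (C : ℝ)
    (hC : ∀ x, |f x| ≤ C) {S : Set ℝ} (hS : S ⊆ Icc 0 1) : IntegrableOn f S := by
  have := finite_restrict hS
  exact Integrable.of_bound hf.aestronglyMeasurable C (Eventually.of_forall hC)

lemma measurable_inner {f : ℝ → ℝ → ℝ} (hf : Measurable (Function.uncurry f)) {T : Set ℝ} :
    Measurable fun x => ∫ y in T, f x y :=
  (StronglyMeasurable.integral_prod_right (ν := volume.restrict T)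
    (show StronglyMeasurable (Function.uncurry f) from hf.stronglyMeasurable)).measurable

lemma abs_inner_le {f : ℝ → ℝ} {C : ℝ} (hC : ∀ x, |f x| ≤ C) {S : Set ℝ} (hS : S ⊆ Icc 0 1) :
    |∫ x in S, f x| ≤ C * volume.real S := by
  rw [← Real.norm_eq_abs]
  exact norm_setIntegral_le_of_norm_le_const (volume_lt_top hS) fun x _ => hC x

lemma abs_inner_le' {f : ℝ → ℝ} {C : ℝ} (hC : ∀ x, |f x| ≤ C) {S : Set ℝ} (hS : S ⊆ Icc 0 1) :
    |∫ x in S, f x| ≤ C := by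
  have h0 : 0 ≤ C := (abs_nonneg _).trans (hC 0)
  exact (abs_inner_le hC hS).trans (mul_le_of_le_one_right h0 (volReal_le_one hS))

lemma rectInt_swap {u : ℝ → ℝ → ℝ} (hu : BddKernel u) {S T : Set ℝ}
    (hS : S ⊆ Icc 0 1) (hT : T ⊆ Icc 0 1) : rectInt u S T = rectInt u T S := by
  unfold rectInt
  have h := integral_integral_swap (integrable_prod_of_bdd hu.meas 1
    (fun x y => abs_le.2 ⟨by linarith [hu.nonneg x y], hu.le_one x y⟩) hS hT)
  rw [h]
  simp only [hu.symm]

lemma BddKernel.abs_le {u : ℝ → ℝ → ℝ} (hu : BddKernel u) (x y : ℝ) : |u x y| ≤ 1 :=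
  _root_.abs_le.2 ⟨by linarith [hu.nonneg x y], hu.le_one x y⟩

lemma rectInt_nonneg {u : ℝ → ℝ → ℝ} (hu : BddKernel u) (S T : Set ℝ) : 0 ≤ rectInt u S T :=
  integral_nonneg fun _ => integral_nonneg fun _ => hu.nonneg _ _

lemma rectInt_le {u : ℝ → ℝ → ℝ} (hu : BddKernel u) {S T : Set ℝ}
    (hS : S ⊆ Icc 0 1) (hT : T ⊆ Icc 0 1) :
    rectInt u S T ≤ volume.real S * volume.real T := by
  have h : |∫ x in S, ∫ y in T, u x y| ≤ (1 * volume.real T) * volume.real S :=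
    abs_inner_le (fun x => abs_inner_le (hu.abs_le x) hT) hS
  have := (le_abs_self _).trans h
  unfold rectInt
  linarith

/-! ### Consequences of a bound on `Γ` -/

lemma abs_max_zero_le {t C : ℝ} (h : |t| ≤ C) : max t 0 ≤ C :=
  max_le ((le_abs_self t).trans h) ((abs_nonneg t).trans h)

/-- The integrand in the definition of `gammaA`. -/
noncomputable def gammaFun (w : ℝ → ℝ → ℝ) (A : Set ℝ) (y z : ℝ) : ℝ :=
  if y < z then
      max (∫ x in A ∩ Icc 0 y, (w x z - w x y)) 0
        + max (∫ x in A ∩ Icc z 1, (w x y - w x z)) 0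
    else 0

lemma gammaFun_nonneg (w : ℝ → ℝ → ℝ) (A : Set ℝ) (y z : ℝ) : 0 ≤ gammaFun w A y z := by
  unfold gammaFun
  split_ifs
  · positivity
  · exact le_rfl

lemma gammaA_nonneg (w : ℝ → ℝ → ℝ) (A : Set ℝ) : 0 ≤ gammaA w A :=
  integral_nonneg fun y => integral_nonneg fun z => gammaFun_nonneg w A y z

lemma Gamma_nonneg (w : ℝ → ℝ → ℝ) : 0 ≤ Gamma w := by
  apply Real.sSup_nonneg
  rintro r ⟨A, -, -, rfl⟩
  exact gammaA_nonneg w A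

lemma BddKernel.abs_sub_le {u : ℝ → ℝ → ℝ} (hu : BddKernel u) (x y x' y' : ℝ) :
    |u x y - u x' y'| ≤ 1 :=
  _root_.abs_le.2 ⟨by linarith [hu.nonneg x y, hu.le_one x' y'],
    by linarith [hu.le_one x y, hu.nonneg x' y']⟩

lemma gammaFun_le {u : ℝ → ℝ → ℝ} (hu : BddKernel u) {A : Set ℝ} (hA : A ⊆ Icc 0 1) (y z : ℝ) :
    |gammaFun u A y z| ≤ 2 := by
  rw [abs_of_nonneg (gammaFun_nonneg u A y z)]
  unfold gammaFun
  split_ifs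
  · have h1 := abs_max_zero_le (abs_inner_le' (fun x => hu.abs_sub_le x z x y)
      (S := A ∩ Icc 0 y) (inter_subset_left.trans hA))
    have h2 := abs_max_zero_le (abs_inner_le' (fun x => hu.abs_sub_le x y x z)
      (S := A ∩ Icc z 1) (inter_subset_left.trans hA))
    linarith
  · norm_num

lemma gammaFun_measurable {u : ℝ → ℝ → ℝ} (hu : BddKernel u) (A : Set ℝ) :
    Measurable (Function.uncurry (gammaFun u A)) := by
  have hm := hu.meas
  -- The moving domains of integration are turned into indicator functions.
  have key : ∀ (D : Set ((ℝ × ℝ) × ℝ)) (g : ℝ × ℝ → ℝ → ℝ), MeasurableSet D →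
      Measurable (Function.uncurry g) →
      Measurable fun p : ℝ × ℝ => ∫ x in A ∩ {x | (p, x) ∈ D}, g p x := by
    intro D g hD hg
    have h1 : ∀ p : ℝ × ℝ, ∫ x in A ∩ {x | (p, x) ∈ D}, g p x
        = ∫ x in A, D.indicator (Function.uncurry g) (p, x) := by
      intro p
      have hDp : MeasurableSet {x | (p, x) ∈ D} := measurable_prodMk_left hD
      rw [← setIntegral_indicator hDp]
      rfl
    simp only [h1]
    exact (StronglyMeasurable.integral_prod_right' (ν := volume.restrict A)
      (hg.indicator hD).stronglyMeasurable).measurable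
  have e1 := key {q | 0 ≤ q.2 ∧ q.2 ≤ q.1.1} (fun p x => u x p.2 - u x p.1)
    ((measurableSet_le measurable_const measurable_snd).inter
      (measurableSet_le measurable_snd (measurable_fst.comp measurable_fst)))
    (by
      have a : Measurable fun q : (ℝ × ℝ) × ℝ => Function.uncurry u (q.2, q.1.2) :=
        hm.comp (by fun_prop)
      have b : Measurable fun q : (ℝ × ℝ) × ℝ => Function.uncurry u (q.2, q.1.1) :=
        hm.comp (by fun_prop)
      exact a.sub b)
  have e2 := key {q | q.1.2 ≤ q.2 ∧ q.2 ≤ 1} (fun p x => u x p.1 - u x p.2)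
    ((measurableSet_le (measurable_snd.comp measurable_fst) measurable_snd).inter
      (measurableSet_le measurable_snd measurable_const))
    (by
      have a : Measurable fun q : (ℝ × ℝ) × ℝ => Function.uncurry u (q.2, q.1.2) :=
        hm.comp (by fun_prop)
      have b : Measurable fun q : (ℝ × ℝ) × ℝ => Function.uncurry u (q.2, q.1.1) :=
        hm.comp (by fun_prop)
      exact b.sub a)
  exact Measurable.ite (measurableSet_lt measurable_fst measurable_snd)
    ((e1.max measurable_const).add (e2.max measurable_const)) measurable_const

lemma gammaA_le_Gamma {u : ℝ → ℝ → ℝ} (hu : BddKernel u) {A : Set ℝ} (hA : MeasurableSet A)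
    (hA1 : A ⊆ Icc 0 1) : gammaA u A ≤ Gamma u := by
  refine le_csSup ⟨2, ?_⟩ ⟨A, hA, hA1, rfl⟩
  rintro r ⟨A, -, hA, rfl⟩
  exact (le_abs_self _).trans
    (abs_inner_le' (fun y => abs_inner_le' (fun z => gammaFun_le hu hA y z) le_rfl) le_rfl)

lemma setIntegral_gammaFun_le {u : ℝ → ℝ → ℝ} (hu : BddKernel u) {A Y Z : Set ℝ}
    (hA : MeasurableSet A) (hA1 : A ⊆ Icc 0 1) (hY : Y ⊆ Icc 0 1) (hZ : Z ⊆ Icc 0 1) :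
    ∫ y in Y, ∫ z in Z, gammaFun u A y z ≤ Gamma u := by
  refine le_trans ?_ (gammaA_le_Gamma hu hA hA1)
  have hm := gammaFun_measurable hu A
  have h1 := integrable_prod_of_bdd hm 2 (gammaFun_le hu hA1) le_rfl le_rfl
  have h2 := integrable_prod_of_bdd hm 2 (gammaFun_le hu hA1) hY hZ
  have e1 := integral_prod _ h1
  have e2 := integral_prod _ h2
  simp only [Function.uncurry_apply_pair] at e1 e2
  change _ ≤ ∫ y in Icc (0:ℝ) 1, ∫ z in Icc (0:ℝ) 1, gammaFun u A y z
  rw [← e1, ← e2]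
  rw [Measure.prod_restrict] at h1 ⊢
  rw [Measure.prod_restrict]
  exact setIntegral_mono_set h1 (Eventually.of_forall fun p => gammaFun_nonneg u A p.1 p.2)
    (LE.le.eventuallyLE (prod_mono hY hZ))

lemma BddKernel.sub_inner {u : ℝ → ℝ → ℝ} (hu : BddKernel u) {A : Set ℝ} (hA : A ⊆ Icc 0 1)
    (y z : ℝ) : (∫ x in A, u z x) - (∫ x in A, u y x) = ∫ x in A, (u x z - u x y) := by
  have h : ∀ y, IntegrableOn (u y) A := fun y =>
    integrableOn_of_bdd (hu.meas.comp measurable_prodMk_left) 1 (hu.abs_le y) hA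
  rw [← integral_sub (h z) (h y)]
  simp only [hu.symm z, hu.symm y]

/-- If `a z - a y` is dominated by the integrand of `Γ`, the averages of `a` over `Y`
and `Z` are almost ordered. -/
lemma average_le_of_gammaFun {u : ℝ → ℝ → ℝ} (hu : BddKernel u) {A Y Z : Set ℝ}
    (hA : MeasurableSet A) (hA1 : A ⊆ Icc 0 1) (hY : Y ⊆ Icc 0 1) (hZ : Z ⊆ Icc 0 1)
    (hYm : MeasurableSet Y) (hZm : MeasurableSet Z) {a : ℝ → ℝ} (ha : Measurable a)
    (ha1 : ∀ y, |a y| ≤ 1) (h : ∀ y ∈ Y, ∀ z ∈ Z, a z - a y ≤ gammaFun u A y z) :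
    volume.real Y * (∫ z in Z, a z) ≤ volume.real Z * (∫ y in Y, a y) + Gamma u := by
  have h0 := setIntegral_gammaFun_le hu hA hA1 hY hZ
  have hm := gammaFun_measurable hu A
  have := finite_restrict hY
  have := finite_restrict hZ
  have e : ∫ y in Y, ∫ z in Z, (a z - a y)
      = volume.real Y * (∫ z in Z, a z) - volume.real Z * (∫ y in Y, a y) := by
    have : ∀ y, ∫ z in Z, (a z - a y) = (∫ z in Z, a z) - volume.real Z * a y := by
      intro y
      rw [integral_sub (integrableOn_of_bdd ha 1 ha1 hZ) (integrable_const _)]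
      simp
    simp only [this]
    rw [integral_sub (integrable_const _) ((integrableOn_of_bdd ha 1 ha1 hY).const_mul _),
      integral_const_mul]
    simp
  have hd : Measurable (Function.uncurry fun y z => a z - a y) :=
    (ha.comp measurable_snd).sub (ha.comp measurable_fst)
  have hd2 : ∀ y z, |a z - a y| ≤ 2 := fun y z => by
    have := abs_sub (a z) (a y)
    linarith [ha1 z, ha1 y]
  have : ∫ y in Y, ∫ z in Z, (a z - a y) ≤ ∫ y in Y, ∫ z in Z, gammaFun u A y z := by
    apply setIntegral_mono_on
    · exact integrableOn_of_bdd (measurable_inner hd) 2 (fun y => abs_inner_le' (hd2 y) hZ) hY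
    · exact integrableOn_of_bdd (measurable_inner hm) 2
        (fun y => abs_inner_le' (gammaFun_le hu hA1 y) hZ) hY
    · exact hYm
    · intro y hy
      apply setIntegral_mono_on
      · exact integrableOn_of_bdd (hd.comp measurable_prodMk_left) 2 (hd2 y) hZ
      · exact integrableOn_of_bdd (hm.comp measurable_prodMk_left) 2 (gammaFun_le hu hA1 y) hZ
      · exact hZm
      · exact h y hy
  linarith

/-- For `A < Y < Z`, the normalised integral of `u` over `A × Z` is at most the one over `A × Y`,
up to `Γ(u)`. -/
lemma rectInt_right {u : ℝ → ℝ → ℝ} (hu : BddKernel u) {A Y Z : Set ℝ}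
    (hA : MeasurableSet A) (hA1 : A ⊆ Icc 0 1) (hY : Y ⊆ Icc 0 1) (hZ : Z ⊆ Icc 0 1)
    (hYm : MeasurableSet Y) (hZm : MeasurableSet Z)
    (hAY : ∀ x ∈ A, ∀ y ∈ Y, x ≤ y) (hYZ : ∀ y ∈ Y, ∀ z ∈ Z, y < z) :
    volume.real Y * rectInt u A Z ≤ volume.real Z * rectInt u A Y + Gamma u := by
  rw [rectInt_swap hu hA1 hZ, rectInt_swap hu hA1 hY]
  refine average_le_of_gammaFun hu hA hA1 hY hZ hYm hZm (a := fun y => ∫ x in A, u y x)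
    (measurable_inner hu.meas) (fun y => abs_inner_le' (hu.abs_le y) hA1) ?_
  intro y hy z hz
  have hAy : A ∩ Icc 0 y = A := inter_eq_left.2 fun x hx => ⟨(hA1 hx).1, hAY x hx y hy⟩
  simp only [gammaFun, if_pos (hYZ y hy z hz), hAy]
  rw [hu.sub_inner hA1]
  have := le_max_left (∫ x in A, (u x z - u x y)) 0
  have := le_max_right (∫ x in A ∩ Icc z 1, (u x y - u x z)) 0
  linarith

/-- For `Y < Z < A`, the normalised integral of `u` over `Y × A` is at most the one over `Z × A`,
up to `Γ(u)`. -/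
lemma rectInt_left {u : ℝ → ℝ → ℝ} (hu : BddKernel u) {A Y Z : Set ℝ}
    (hA : MeasurableSet A) (hA1 : A ⊆ Icc 0 1) (hY : Y ⊆ Icc 0 1) (hZ : Z ⊆ Icc 0 1)
    (hYm : MeasurableSet Y) (hZm : MeasurableSet Z)
    (hZA : ∀ z ∈ Z, ∀ x ∈ A, z ≤ x) (hYZ : ∀ y ∈ Y, ∀ z ∈ Z, y < z) :
    volume.real Z * rectInt u Y A ≤ volume.real Y * rectInt u Z A + Gamma u := by
  have h := average_le_of_gammaFun hu hA hA1 hY hZ hYm hZm (a := fun y => -∫ x in A, u y x)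
    (measurable_inner hu.meas).neg
    (fun y => by rw [abs_neg]; exact abs_inner_le' (hu.abs_le y) hA1) ?_
  · rw [integral_neg, integral_neg] at h
    unfold rectInt
    linarith
  intro y hy z hz
  have hAz : A ∩ Icc z 1 = A := inter_eq_left.2 fun x hx => ⟨hZA z hz x hx, (hA1 hx).2⟩
  simp only [gammaFun, if_pos (hYZ y hy z hz), hAz]
  rw [neg_sub_neg, hu.sub_inner hA1]
  have := le_max_left (∫ x in A, (u x y - u x z)) 0
  have := le_max_right (∫ x in A ∩ Icc 0 y, (u x z - u x y)) 0
  linarith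

/-! ### Block averages on the grid of mesh `1/k` -/

/-- The combinatorial core of the estimate: `b j` are block masses of an almost decreasing function
over blocks of length `h`, and `p j` its masses over subsets of size `t j` of those blocks.  Each `p j`
lies, up to `γ / h`, between the values predicted by the two neighbouring blocks, so the deviations
telescope. -/
lemma sum_deviation_le (n : ℕ) {h γ : ℝ} (hh : 0 < h) (hγ : 0 ≤ γ) (p t b : ℕ → ℝ)
    (ht0 : ∀ j < n, 0 ≤ t j) (ht : ∀ j < n, t j ≤ h)
    (hp0 : ∀ j < n, 0 ≤ p j) (hp : ∀ j < n, p j ≤ h * t j)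
    (hb0 : ∀ j < n, 0 ≤ b j) (hb : ∀ j < n, b j ≤ h * h)
    (h1 : ∀ j l, j < l → l < n → h * p l ≤ t l * b j + γ)
    (h2 : ∀ j l, j < l → l < n → t j * b l ≤ h * p j + γ)
    (h3 : ∀ j l, j < l → l < n → h * b l ≤ h * b j + γ) :
    ∑ j ∈ Finset.range n, |p j - t j * b j / h| ≤ 2 * (h * h) + n * (4 * γ / h) := by
  -- `β` is `b` shifted by one and continued by its extreme possible values.
  set β : ℕ → ℝ := fun j => if j = 0 then h * h else if j ≤ n then b (j - 1) else 0 with hβ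
  have hβ0 : ∀ j, 0 ≤ β j := by
    intro j
    simp only [hβ]
    split_ifs with a c
    · positivity
    · exact hb0 _ (by omega)
    · exact le_rfl
  have hβ1 : ∀ j, β j ≤ h * h := by
    intro j
    simp only [hβ]
    split_ifs with a c
    · exact le_rfl
    · exact hb _ (by omega)
    · positivity
  have key : ∀ j ∈ Finset.range n,
      |p j - t j * b j / h| ≤ ((β j + β (j + 1)) - (β (j + 1) + β (j + 1 + 1))) + 4 * γ / h := by
    intro j hj
    have hj : j < n := Finset.mem_range.1 hj
    have t0 := ht0 j hj
    have t1 := ht j hj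
    have u1 : h * p j ≤ t j * β j + γ := by
      simp only [hβ]
      split_ifs with a c
      · nlinarith [hp j hj]
      · exact h1 _ _ (by omega) hj
      · omega
    have u2 : h * b j ≤ h * β j + γ := by
      simp only [hβ]
      split_ifs with a c
      · nlinarith [hb j hj]
      · exact h3 _ _ (by omega) hj
      · omega
    have l1 : t j * β (j + 2) ≤ h * p j + γ := by
      simp only [hβ, if_neg (show ¬ j + 2 = 0 by omega)]
      split_ifs with c
      · exact h2 _ _ (by omega) (by omega)
      · have := mul_nonneg hh.le (hp0 j hj)
        linarith
    have l2 : h * β (j + 2) ≤ h * b j + γ := by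
      simp only [hβ, if_neg (show ¬ j + 2 = 0 by omega)]
      split_ifs with c
      · exact h3 _ _ (by omega) (by omega)
      · have := mul_nonneg hh.le (hb0 j hj)
        linarith
    -- Up to errors in `γ`, both `h * p j` and `t j * b j` now lie in `[t j * β (j + 2), t j * β j]`.
    change _ ≤ ((β j + β (j + 1)) - (β (j + 1) + β (j + 2))) + 4 * γ / h
    generalize β j = U at *
    generalize β (j + 2) = L at *
    have g1 : -(2 * γ) ≤ (h - t j) * (U - L) := by
      have a : 0 ≤ (h - t j) * (h * (U - L) + 2 * γ) :=
        mul_nonneg (by linarith) (by linarith)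
      have c : 0 ≤ t j * γ := mul_nonneg t0 hγ
      have d : 0 ≤ h * ((h - t j) * (U - L) + 2 * γ) := by nlinarith
      have := nonneg_of_mul_nonneg_right d hh
      linarith
    have g2 : t j * b j ≤ t j * U + γ := by
      have a : t j * (h * b j) ≤ t j * (h * U + γ) := mul_le_mul_of_nonneg_left u2 t0
      have c : t j * γ ≤ h * γ := mul_le_mul_of_nonneg_right t1 hγ
      have d : h * (t j * b j) ≤ h * (t j * U + γ) := by nlinarith
      exact le_of_mul_le_mul_left d hh
    have g3 : t j * L ≤ t j * b j + γ := by
      have a : t j * (h * L) ≤ t j * (h * b j + γ) := mul_le_mul_of_nonneg_left l2 t0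
      have c : t j * γ ≤ h * γ := mul_le_mul_of_nonneg_right t1 hγ
      have d : h * (t j * L) ≤ h * (t j * b j + γ) := by nlinarith
      exact le_of_mul_le_mul_left d hh
    have e1 : p j - t j * b j / h = (h * p j - t j * b j) / h := by field_simp
    have e2 : ((U + β (j + 1)) - (β (j + 1) + L)) + 4 * γ / h
        = (h * (U - L) + 4 * γ) / h := by field_simp; ring
    rw [e1, e2, abs_div, abs_of_pos hh]
    apply div_le_div_of_nonneg_right _ hh.le
    rw [abs_le]
    constructor <;> nlinarith
  refine (Finset.sum_le_sum key).trans ?_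
  rw [Finset.sum_add_distrib, Finset.sum_range_sub' (fun j => β j + β (j + 1))]
  simp only [Finset.sum_const, Finset.card_range, nsmul_eq_mul]
  linarith [hβ0 n, hβ0 (n + 1), hβ1 0, hβ1 (0 + 1)]

/-- The index of the cell of the uniform grid with `k` cells that contains `x`; points outside
`[0,1]` are sent to the first or last cell. -/
noncomputable def cell (k : ℕ) (x : ℝ) : ℕ := min ⌊(k : ℝ) * x⌋₊ (k - 1)

/-- The `i`-th cell of the uniform grid of `[0,1]` with `k` cells. -/
def cellSet (k i : ℕ) : Set ℝ := Icc 0 1 ∩ {x | cell k x = i}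

lemma cell_mono (k : ℕ) {x y : ℝ} (h : x ≤ y) : cell k x ≤ cell k y :=
  min_le_min_right _ (Nat.floor_le_floor (mul_le_mul_of_nonneg_left h (Nat.cast_nonneg k)))

lemma cell_lt {k : ℕ} (hk : 0 < k) (x : ℝ) : cell k x < k :=
  (min_le_right _ _).trans_lt (by omega)

lemma cell_measurable (k : ℕ) : Measurable (cell k) :=
  (Nat.measurable_floor.comp (measurable_const.mul measurable_id)).min measurable_const

lemma cellSet_measurable (k i : ℕ) : MeasurableSet (cellSet k i) :=
  measurableSet_Icc.inter (cell_measurable k (measurableSet_singleton i))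

lemma cellSet_subset (k i : ℕ) : cellSet k i ⊆ Icc 0 1 := inter_subset_left

lemma cellSet_lt {k i j : ℕ} (h : i < j) {x y : ℝ} (hx : x ∈ cellSet k i) (hy : y ∈ cellSet k j) :
    x < y := by
  by_contra hc
  have := cell_mono k (not_lt.1 hc)
  have a : cell k x = i := hx.2
  have b : cell k y = j := hy.2
  omega

lemma cellSet_volume {k i : ℕ} (hi : i < k) : volume.real (cellSet k i) = 1 / k := by
  have hk : (0:ℝ) < k := by exact_mod_cast (by omega : 0 < k)
  have h : cellSet k i =ᵐ[volume] Ico ((i:ℝ) / k) ((i + 1) / k) := by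
    have h1 : ∀ᵐ x : ℝ, x ≠ 1 := by simp [ae_iff]
    filter_upwards [h1] with x hx
    apply propext
    change x ∈ cellSet k i ↔ x ∈ Ico ((i:ℝ) / k) ((i + 1) / k)
    have hik : (i:ℝ) + 1 ≤ k := by exact_mod_cast hi
    constructor
    · rintro ⟨⟨h0, h1⟩, hc⟩
      have hlt : ⌊(k:ℝ) * x⌋₊ < k := by
        rw [Nat.floor_lt (by positivity)]
        nlinarith [lt_of_le_of_ne h1 hx]
      have hf : ⌊(k:ℝ) * x⌋₊ = i := by
        have : min ⌊(k:ℝ) * x⌋₊ (k - 1) = i := hc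
        omega
      rw [Nat.floor_eq_iff (by positivity)] at hf
      rw [mem_Ico, div_le_iff₀ hk, lt_div_iff₀ hk]
      constructor <;> linarith
    · intro hm
      rw [mem_Ico, div_le_iff₀ hk, lt_div_iff₀ hk] at hm
      have hi0 : (0:ℝ) ≤ i := Nat.cast_nonneg i
      have h0 : 0 ≤ x := by
        by_contra hneg
        nlinarith
      have h1 : x ≤ 1 := by
        by_contra hneg
        nlinarith
      refine ⟨⟨h0, h1⟩, ?_⟩
      have hf : ⌊(k:ℝ) * x⌋₊ = i := by
        rw [Nat.floor_eq_iff (by positivity)]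
        constructor <;> linarith
      change min ⌊(k:ℝ) * x⌋₊ (k - 1) = i
      omega
  rw [measureReal_congr h, Real.volume_real_Ico_of_le (by gcongr; linarith)]
  field_simp
  ring

lemma biUnion_cellSet {k : ℕ} (hk : 0 < k) {S : Set ℝ} (hS : S ⊆ Icc 0 1) :
    S = ⋃ i ∈ Finset.range k, S ∩ cellSet k i := by
  ext x
  simp only [mem_iUnion, Finset.mem_range, exists_prop]
  constructor
  · exact fun hx => ⟨cell k x, cell_lt hk x, hx, hS hx, rfl⟩
  · rintro ⟨i, -, hx, -⟩
    exact hx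

lemma setIntegral_cells {k : ℕ} (hk : 0 < k) {f : ℝ → ℝ} (hf : Measurable f) (C : ℝ)
    (hC : ∀ x, |f x| ≤ C) {S : Set ℝ} (hSm : MeasurableSet S) (hS : S ⊆ Icc 0 1) :
    ∫ x in S, f x = ∑ i ∈ Finset.range k, ∫ x in S ∩ cellSet k i, f x := by
  conv_lhs => rw [biUnion_cellSet hk hS]
  apply integral_biUnion_finset
  · exact fun i _ => hSm.inter (cellSet_measurable k i)
  · intro i _ j _ hij
    refine Set.disjoint_left.2 fun x hx hy => hij ?_
    exact hx.2.2.symm.trans hy.2.2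
  · exact fun i _ => integrableOn_of_bdd hf C hC (inter_subset_left.trans hS)

lemma rectInt_cells {k : ℕ} (hk : 0 < k) {u : ℝ → ℝ → ℝ} (hu : BddKernel u) {S T : Set ℝ}
    (hSm : MeasurableSet S) (hS : S ⊆ Icc 0 1) (hTm : MeasurableSet T) (hT : T ⊆ Icc 0 1) :
    rectInt u S T = ∑ i ∈ Finset.range k, ∑ j ∈ Finset.range k,
      rectInt u (S ∩ cellSet k i) (T ∩ cellSet k j) := by
  unfold rectInt
  rw [setIntegral_cells hk (measurable_inner hu.meas) 1 (fun x => abs_inner_le' (hu.abs_le x) hT)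
    hSm hS]
  refine Finset.sum_congr rfl fun i _ => ?_
  have h : ∀ x, ∫ y in T, u x y = ∑ j ∈ Finset.range k, ∫ y in T ∩ cellSet k j, u x y := fun x =>
    setIntegral_cells hk (hu.meas.comp measurable_prodMk_left) 1 (hu.abs_le x) hTm hT
  simp only [h]
  apply integral_finsetSum
  exact fun j _ => integrableOn_of_bdd (measurable_inner hu.meas) 1
    (fun x => abs_inner_le' (hu.abs_le x) (inter_subset_left.trans hT)) (inter_subset_left.trans hS)

/-- The average of `u` over the cell `(i, j)` if `i ≠ j`, and `1` on the diagonal, which is the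
largest possible value and hence compatible with the Robinson property. -/
noncomputable def cellAvg (u : ℝ → ℝ → ℝ) (k i j : ℕ) : ℝ :=
  if i = j then 1 else (k:ℝ) ^ 2 * rectInt u (cellSet k i) (cellSet k j)

/-- The step kernel taking the value `cellAvg u k i j` on the cell `(i, j)`. -/
noncomputable def stepKernel (u : ℝ → ℝ → ℝ) (k : ℕ) (x y : ℝ) : ℝ :=
  cellAvg u k (cell k x) (cell k y)

lemma cellAvg_nonneg {u : ℝ → ℝ → ℝ} (hu : BddKernel u) (k i j : ℕ) : 0 ≤ cellAvg u k i j := by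
  unfold cellAvg
  split_ifs
  · exact zero_le_one
  · exact mul_nonneg (by positivity) (rectInt_nonneg hu _ _)

lemma cellAvg_le_one {u : ℝ → ℝ → ℝ} (hu : BddKernel u) {k i j : ℕ} (hi : i < k) (hj : j < k) :
    cellAvg u k i j ≤ 1 := by
  unfold cellAvg
  split_ifs
  · exact le_rfl
  · have hk : (0:ℝ) < k := by exact_mod_cast (by omega : 0 < k)
    have := rectInt_le hu (cellSet_subset k i) (cellSet_subset k j)
    rw [cellSet_volume hi, cellSet_volume hj] at this
    calc (k:ℝ) ^ 2 * rectInt u (cellSet k i) (cellSet k j)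
        ≤ (k:ℝ) ^ 2 * (1 / k * (1 / k)) := by gcongr
      _ = 1 := by field_simp

lemma stepKernel_bdd {u : ℝ → ℝ → ℝ} (hu : BddKernel u) {k : ℕ} (hk : 0 < k) :
    BddKernel (stepKernel u k) where
  meas := by
    have h : Measurable fun q : ℕ × ℕ => cellAvg u k q.1 q.2 := Measurable.of_discrete
    exact h.comp (((cell_measurable k).comp measurable_fst).prodMk
      ((cell_measurable k).comp measurable_snd))
  symm x y := by
    unfold stepKernel cellAvg
    rw [rectInt_swap hu (cellSet_subset _ _) (cellSet_subset _ _)]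
    simp only [eq_comm]
  nonneg x y := cellAvg_nonneg hu _ _ _
  le_one x y := cellAvg_le_one hu (cell_lt hk x) (cell_lt hk y)

/-- The step kernel is Robinson up to `k³ Γ(u)`. -/
lemma stepKernel_robinson {u : ℝ → ℝ → ℝ} (hu : BddKernel u) {k : ℕ} (hk : 0 < k) {x y z : ℝ}
    (hxy : x ≤ y) (hyz : y ≤ z) :
    stepKernel u k x z ≤ stepKernel u k x y + k ^ 3 * Gamma u ∧
    stepKernel u k x z ≤ stepKernel u k y z + k ^ 3 * Gamma u := by
  have a1 := cell_mono k hxy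
  have a2 := cell_mono k hyz
  have b1 := cell_lt hk x
  have b2 := cell_lt hk y
  have b3 := cell_lt hk z
  unfold stepKernel
  generalize cell k x = i at *
  generalize cell k y = j at *
  generalize cell k z = l at *
  have hk' : (0:ℝ) < k := by exact_mod_cast hk
  have hG : 0 ≤ (k:ℝ) ^ 3 * Gamma u := mul_nonneg (by positivity) (Gamma_nonneg u)
  rcases a1.eq_or_lt with rfl | a1
  · refine ⟨?_, by linarith⟩
    have := cellAvg_le_one hu b1 b3
    have e : cellAvg u k i i = 1 := if_pos rfl
    linarith
  rcases a2.eq_or_lt with rfl | a2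
  · refine ⟨by linarith, ?_⟩
    have := cellAvg_le_one hu b1 b3
    have e : cellAvg u k j j = 1 := if_pos rfl
    linarith
  have m := cellSet_measurable k
  have s := cellSet_subset k
  have r1 := rectInt_right hu (m i) (s i) (s j) (s l) (m j) (m l)
    (fun x hx y hy => (cellSet_lt a1 hx hy).le) (fun x hx y hy => cellSet_lt a2 hx hy)
  have r2 := rectInt_left hu (m l) (s l) (s i) (s j) (m i) (m j)
    (fun x hx y hy => (cellSet_lt a2 hx hy).le) (fun x hx y hy => cellSet_lt a1 hx hy)
  rw [cellSet_volume b2] at r1 r2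
  rw [cellSet_volume b3] at r1
  rw [cellSet_volume b1] at r2
  simp only [cellAvg, if_neg a1.ne, if_neg a2.ne, if_neg (a1.trans a2).ne]
  have conv : ∀ P Q : ℝ, 1 / (k:ℝ) * P ≤ 1 / k * Q + Gamma u →
      (k:ℝ) ^ 2 * P ≤ k ^ 2 * Q + k ^ 3 * Gamma u := by
    intro P Q h
    have := mul_le_mul_of_nonneg_left h (by positivity : (0:ℝ) ≤ (k:ℝ) ^ 3)
    have e1 : (k:ℝ) ^ 3 * (1 / k * P) = k ^ 2 * P := by field_simp
    have e2 : (k:ℝ) ^ 3 * (1 / k * Q + Gamma u) = k ^ 2 * Q + k ^ 3 * Gamma u := by field_simp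
    linarith
  exact ⟨conv _ _ r1, conv _ _ r2⟩

/-! ### Cut-norm distance between a kernel and its block averages -/

lemma measure_inter_cell_le {k i : ℕ} (hi : i < k) (S : Set ℝ) :
    volume.real (S ∩ cellSet k i) ≤ 1 / k := by
  rw [← cellSet_volume hi]
  exact measureReal_mono inter_subset_right (volume_lt_top (cellSet_subset k i)).ne

/-- Averaging in the second variable, over the blocks to the right of block `i`. -/
lemma sum_right_le {u : ℝ → ℝ → ℝ} (hu : BddKernel u) {k i : ℕ} (hi : i < k) {S T : Set ℝ}
    (hS : MeasurableSet S) (hT : MeasurableSet T) :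
    ∑ j ∈ Finset.Ico (i + 1) k, |rectInt u (S ∩ cellSet k i) (T ∩ cellSet k j)
        - volume.real (T ∩ cellSet k j) * rectInt u (S ∩ cellSet k i) (cellSet k j) / (1 / k)|
      ≤ 2 * (1 / k * (1 / k)) + k * (4 * Gamma u / (1 / k)) := by
  have hk : (0:ℝ) < k := by exact_mod_cast (by omega : 0 < k)
  have m := cellSet_measurable k
  have s := cellSet_subset k
  have sT : ∀ j, T ∩ cellSet k j ⊆ Icc 0 1 := fun j => inter_subset_right.trans (s j)
  have mT : ∀ j, MeasurableSet (T ∩ cellSet k j) := fun j => hT.inter (m j)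
  have sS : S ∩ cellSet k i ⊆ Icc 0 1 := inter_subset_right.trans (s i)
  have mS : MeasurableSet (S ∩ cellSet k i) := hS.inter (m i)
  have vS := measure_inter_cell_le hi S
  have hG := Gamma_nonneg u
  rw [Finset.sum_Ico_eq_sum_range]
  have main := sum_deviation_le (k - (i + 1)) (h := 1 / k) (γ := Gamma u) (by positivity) hG
    (fun j => rectInt u (S ∩ cellSet k i) (T ∩ cellSet k (i + 1 + j)))
    (fun j => volume.real (T ∩ cellSet k (i + 1 + j)))
    (fun j => rectInt u (S ∩ cellSet k i) (cellSet k (i + 1 + j)))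
    (fun j _ => measureReal_nonneg)
    (fun j hj => measure_inter_cell_le (by omega) T)
    (fun j _ => rectInt_nonneg hu _ _)
    (fun j _ => (rectInt_le hu sS (sT _)).trans (by gcongr))
    (fun j _ => rectInt_nonneg hu _ _)
    (fun j hj => (rectInt_le hu sS (s _)).trans (by
      rw [cellSet_volume (show i + 1 + j < k by omega)]; gcongr))
    (fun j l hjl hl => by
      have := rectInt_right hu mS sS (s (i + 1 + j)) (sT (i + 1 + l)) (m _) (mT _)
        (fun x hx y hy => (cellSet_lt (by omega) hx.2 hy).le)
        (fun y hy z hz => cellSet_lt (by omega) hy hz.2)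
      rwa [cellSet_volume (show i + 1 + j < k by omega)] at this)
    (fun j l hjl hl => by
      have := rectInt_right hu mS sS (sT (i + 1 + j)) (s (i + 1 + l)) (mT _) (m _)
        (fun x hx y hy => (cellSet_lt (by omega) hx.2 hy.2).le)
        (fun y hy z hz => cellSet_lt (by omega) hy.2 hz)
      rwa [cellSet_volume (show i + 1 + l < k by omega)] at this)
    (fun j l hjl hl => by
      have := rectInt_right hu mS sS (s (i + 1 + j)) (s (i + 1 + l)) (m _) (m _)
        (fun x hx y hy => (cellSet_lt (by omega) hx.2 hy).le)
        (fun y hy z hz => cellSet_lt (by omega) hy hz)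
      rwa [cellSet_volume (show i + 1 + j < k by omega),
        cellSet_volume (show i + 1 + l < k by omega)] at this)
  refine main.trans ?_
  gcongr
  exact Nat.sub_le _ _

/-- Averaging in the first variable, over the blocks to the left of block `j`. -/
lemma sum_left_le {u : ℝ → ℝ → ℝ} (hu : BddKernel u) {k j : ℕ} (hj : j < k) {S : Set ℝ}
    (hS : MeasurableSet S) :
    ∑ i ∈ Finset.range j, |rectInt u (S ∩ cellSet k i) (cellSet k j)
        - volume.real (S ∩ cellSet k i) * rectInt u (cellSet k i) (cellSet k j) / (1 / k)|
      ≤ 2 * (1 / k * (1 / k)) + k * (4 * Gamma u / (1 / k)) := by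
  have hk : (0:ℝ) < k := by exact_mod_cast (by omega : 0 < k)
  have m := cellSet_measurable k
  have s := cellSet_subset k
  have sS : ∀ i, S ∩ cellSet k i ⊆ Icc 0 1 := fun i => inter_subset_right.trans (s i)
  have mS : ∀ i, MeasurableSet (S ∩ cellSet k i) := fun i => hS.inter (m i)
  have hG := Gamma_nonneg u
  rw [← Finset.sum_range_reflect]
  have main := sum_deviation_le j (h := 1 / k) (γ := Gamma u) (by positivity) hG
    (fun i => rectInt u (S ∩ cellSet k (j - 1 - i)) (cellSet k j))
    (fun i => volume.real (S ∩ cellSet k (j - 1 - i)))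
    (fun i => rectInt u (cellSet k (j - 1 - i)) (cellSet k j))
    (fun i _ => measureReal_nonneg)
    (fun i hi => measure_inter_cell_le (by omega) S)
    (fun i _ => rectInt_nonneg hu _ _)
    (fun i _ => (rectInt_le hu (sS _) (s _)).trans (by
      rw [cellSet_volume hj, mul_comm]))
    (fun i _ => rectInt_nonneg hu _ _)
    (fun i hi => (rectInt_le hu (s _) (s _)).trans (by
      rw [cellSet_volume (show j - 1 - i < k by omega), cellSet_volume hj]))
    (fun i l hil hl => by
      have := rectInt_left hu (m j) (s j) (sS (j - 1 - l)) (s (j - 1 - i)) (mS _) (m _)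
        (fun x hx y hy => (cellSet_lt (by omega) hx hy).le)
        (fun y hy z hz => cellSet_lt (by omega) hy.2 hz)
      rwa [cellSet_volume (show j - 1 - i < k by omega)] at this)
    (fun i l hil hl => by
      have := rectInt_left hu (m j) (s j) (s (j - 1 - l)) (sS (j - 1 - i)) (m _) (mS _)
        (fun x hx y hy => (cellSet_lt (by omega) hx.2 hy).le)
        (fun y hy z hz => cellSet_lt (by omega) hy hz.2)
      rwa [cellSet_volume (show j - 1 - l < k by omega)] at this)
    (fun i l hil hl => by
      have := rectInt_left hu (m j) (s j) (s (j - 1 - l)) (s (j - 1 - i)) (m _) (m _)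
        (fun x hx y hy => (cellSet_lt (by omega) hx hy).le)
        (fun y hy z hz => cellSet_lt (by omega) hy hz)
      rwa [cellSet_volume (show j - 1 - i < k by omega),
        cellSet_volume (show j - 1 - l < k by omega)] at this)
  refine main.trans ?_
  gcongr

/-- The error made in block `(i, j)` when `u` is replaced by its average over that block. -/
noncomputable def blockErr (u : ℝ → ℝ → ℝ) (k : ℕ) (S T : Set ℝ) (i j : ℕ) : ℝ :=
  |rectInt u (S ∩ cellSet k i) (T ∩ cellSet k j)
    - volume.real (S ∩ cellSet k i) * volume.real (T ∩ cellSet k j) *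
      ((k:ℝ) ^ 2 * rectInt u (cellSet k i) (cellSet k j))|

/-- Total error above the diagonal.  The averaging is done first in the second variable and then in
the first, each of the two steps being an almost monotone situation. -/
lemma sum_upper_le {u : ℝ → ℝ → ℝ} (hu : BddKernel u) {k : ℕ} (hk : 0 < k) {S T : Set ℝ}
    (hS : MeasurableSet S) (hT : MeasurableSet T) :
    ∑ i ∈ Finset.range k, ∑ j ∈ Finset.Ico (i + 1) k, blockErr u k S T i j
      ≤ 4 / k + 8 * k ^ 3 * Gamma u := by
  have hk' : (0:ℝ) < k := by exact_mod_cast hk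
  set X : ℕ → ℕ → ℝ := fun i j => |rectInt u (S ∩ cellSet k i) (T ∩ cellSet k j)
        - volume.real (T ∩ cellSet k j) * rectInt u (S ∩ cellSet k i) (cellSet k j) / (1 / k)|
    with hX
  set Y : ℕ → ℕ → ℝ := fun i j => |rectInt u (S ∩ cellSet k i) (cellSet k j)
        - volume.real (S ∩ cellSet k i) * rectInt u (cellSet k i) (cellSet k j) / (1 / k)|
    with hY
  have h1 : ∀ i ∈ Finset.range k, ∀ j ∈ Finset.Ico (i + 1) k,
      blockErr u k S T i j ≤ X i j + Y i j := by
    intro i _ j hj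
    have hj : j < k := (Finset.mem_Ico.1 hj).2
    have ht0 : 0 ≤ volume.real (T ∩ cellSet k j) * k := by positivity
    have ht1 : volume.real (T ∩ cellSet k j) * k ≤ 1 := by
      have := measure_inter_cell_le hj T
      rwa [le_div_iff₀ hk'] at this
    have e : rectInt u (S ∩ cellSet k i) (T ∩ cellSet k j)
        - volume.real (S ∩ cellSet k i) * volume.real (T ∩ cellSet k j) *
          ((k:ℝ) ^ 2 * rectInt u (cellSet k i) (cellSet k j))
        = (rectInt u (S ∩ cellSet k i) (T ∩ cellSet k j)
        - volume.real (T ∩ cellSet k j) * rectInt u (S ∩ cellSet k i) (cellSet k j) / (1 / k))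
        + (volume.real (T ∩ cellSet k j) * k) * (rectInt u (S ∩ cellSet k i) (cellSet k j)
        - volume.real (S ∩ cellSet k i) * rectInt u (cellSet k i) (cellSet k j) / (1 / k)) := by
      field_simp
      ring
    unfold blockErr
    rw [e]
    refine (abs_add_le _ _).trans (add_le_add le_rfl ?_)
    rw [abs_mul, abs_of_nonneg ht0]
    exact mul_le_of_le_one_left (abs_nonneg _) ht1
  have h2 : ∑ i ∈ Finset.range k, ∑ j ∈ Finset.Ico (i + 1) k, X i j
      ≤ k * (2 * (1 / k * (1 / k)) + k * (4 * Gamma u / (1 / k))) := by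
    have := Finset.sum_le_card_nsmul (Finset.range k) _ _
      fun i hi => sum_right_le hu (Finset.mem_range.1 hi) hS hT
    simpa only [Finset.card_range, nsmul_eq_mul] using this
  have h3 : ∑ i ∈ Finset.range k, ∑ j ∈ Finset.Ico (i + 1) k, Y i j
      ≤ k * (2 * (1 / k * (1 / k)) + k * (4 * Gamma u / (1 / k))) := by
    rw [Finset.sum_comm' (t' := Finset.range k) (s' := fun j => Finset.range j)
      (fun i j => by simp only [Finset.mem_range, Finset.mem_Ico]; omega)]
    have := Finset.sum_le_card_nsmul (Finset.range k) _ _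
      fun j hj => sum_left_le hu (Finset.mem_range.1 hj) hS
    simpa only [Finset.card_range, nsmul_eq_mul] using this
  have h4 := Finset.sum_le_sum fun i hi => Finset.sum_le_sum (h1 i hi)
  simp only [Finset.sum_add_distrib] at h4
  have e : (k:ℝ) * (2 * (1 / k * (1 / k)) + k * (4 * Gamma u / (1 / k)))
      = 2 / k + 4 * k ^ 3 * Gamma u := by field_simp
  rw [e] at h2 h3
  have e2 : (4:ℝ) / k = 2 / k + 2 / k := by ring
  linarith

lemma rectInt_stepKernel {u : ℝ → ℝ → ℝ} {k : ℕ} {S T : Set ℝ}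
    (hS : MeasurableSet S) (hT : MeasurableSet T) (i j : ℕ) :
    rectInt (stepKernel u k) (S ∩ cellSet k i) (T ∩ cellSet k j)
      = volume.real (S ∩ cellSet k i) * volume.real (T ∩ cellSet k j) * cellAvg u k i j := by
  unfold rectInt
  have h : ∀ x ∈ S ∩ cellSet k i, ∫ y in T ∩ cellSet k j, stepKernel u k x y
      = volume.real (T ∩ cellSet k j) * cellAvg u k i j := by
    intro x hx
    have : ∀ y ∈ T ∩ cellSet k j, stepKernel u k x y = cellAvg u k i j := by
      intro y hy
      have a : cell k x = i := hx.2.2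
      have b : cell k y = j := hy.2.2
      simp only [stepKernel, a, b]
    rw [setIntegral_congr_fun (hT.inter (cellSet_measurable k j)) this]
    simp
  rw [setIntegral_congr_fun (hS.inter (cellSet_measurable k i)) h]
  simp [mul_assoc]

/-- The cut norm of the difference between `u` and its step kernel is at most
`9 / k + 16 k³ Γ(u)`. -/
lemma rectInt_sub_stepKernel_le {u : ℝ → ℝ → ℝ} (hu : BddKernel u) {k : ℕ} (hk : 0 < k)
    {S T : Set ℝ} (hS : MeasurableSet S) (hT : MeasurableSet T)
    (hS1 : S ⊆ Icc 0 1) (hT1 : T ⊆ Icc 0 1) :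
    |rectInt u S T - rectInt (stepKernel u k) S T| ≤ 9 / k + 16 * k ^ 3 * Gamma u := by
  have hk' : (0:ℝ) < k := by exact_mod_cast hk
  set D : ℕ → ℕ → ℝ := fun i j => rectInt u (S ∩ cellSet k i) (T ∩ cellSet k j)
    - rectInt (stepKernel u k) (S ∩ cellSet k i) (T ∩ cellSet k j) with hD
  have e0 : rectInt u S T - rectInt (stepKernel u k) S T
      = ∑ i ∈ Finset.range k, ∑ j ∈ Finset.range k, D i j := by
    rw [rectInt_cells hk hu hS hS1 hT hT1, rectInt_cells hk (stepKernel_bdd hu hk) hS hS1 hT hT1]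
    simp only [hD, Finset.sum_sub_distrib]
  have sS : ∀ i, S ∩ cellSet k i ⊆ Icc 0 1 := fun i => inter_subset_right.trans (cellSet_subset k i)
  have sT : ∀ i, T ∩ cellSet k i ⊆ Icc 0 1 := fun i => inter_subset_right.trans (cellSet_subset k i)
  have upper : ∀ i j, i < j → |D i j| = blockErr u k S T i j := by
    intro i j hij
    simp only [hD, rectInt_stepKernel hS hT, blockErr, cellAvg, if_neg hij.ne]
  have lower : ∀ i j, j < i → |D i j| = blockErr u k T S j i := by
    intro i j hij
    simp only [hD, rectInt_stepKernel hS hT, blockErr, cellAvg, if_neg hij.ne']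
    rw [rectInt_swap hu (sS i) (sT j),
      rectInt_swap hu (cellSet_subset k i) (cellSet_subset k j),
      mul_comm (volume.real (S ∩ cellSet k i))]
  have diag : ∀ i ∈ Finset.range k, |D i i| ≤ 1 / k * (1 / k) := by
    intro i hi
    have hi := Finset.mem_range.1 hi
    have a1 := measure_inter_cell_le hi S
    have a2 := measure_inter_cell_le hi T
    have b : volume.real (S ∩ cellSet k i) * volume.real (T ∩ cellSet k i) ≤ 1 / k * (1 / k) := by
      gcongr
    have c1 := rectInt_le hu (sS i) (sT i)
    have c2 := rectInt_le (stepKernel_bdd hu hk) (sS i) (sT i)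
    have d1 := rectInt_nonneg hu (S ∩ cellSet k i) (T ∩ cellSet k i)
    have d2 := rectInt_nonneg (stepKernel_bdd hu hk) (S ∩ cellSet k i) (T ∩ cellSet k i)
    rw [abs_le]
    constructor <;> simp only [hD] <;> linarith
  have split : ∀ i ∈ Finset.range k, ∑ j ∈ Finset.range k, |D i j|
      = ∑ j ∈ Finset.range i, |D i j| + |D i i| + ∑ j ∈ Finset.Ico (i + 1) k, |D i j| := by
    intro i hi
    rw [← Finset.sum_range_succ, Finset.sum_range_add_sum_Ico]
    exact Finset.mem_range.1 hi
  have hup : ∑ i ∈ Finset.range k, ∑ j ∈ Finset.Ico (i + 1) k, |D i j|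
      ≤ 4 / k + 8 * k ^ 3 * Gamma u := by
    refine le_trans (le_of_eq ?_) (sum_upper_le hu hk hS hT)
    refine Finset.sum_congr rfl fun i _ => Finset.sum_congr rfl fun j hj => upper i j ?_
    have := (Finset.mem_Ico.1 hj).1
    omega
  have hlo : ∑ i ∈ Finset.range k, ∑ j ∈ Finset.range i, |D i j|
      ≤ 4 / k + 8 * k ^ 3 * Gamma u := by
    refine le_trans (le_of_eq ?_) (sum_upper_le hu hk hT hS)
    rw [Finset.sum_comm' (t' := Finset.range k) (s' := fun j => Finset.Ico (j + 1) k)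
      (fun i j => by simp only [Finset.mem_range, Finset.mem_Ico]; omega)]
    refine Finset.sum_congr rfl fun i _ => Finset.sum_congr rfl fun j hj => lower j i ?_
    have := (Finset.mem_Ico.1 hj).1
    omega
  have hdi : ∑ i ∈ Finset.range k, |D i i| ≤ 1 / k := by
    have := Finset.sum_le_card_nsmul (Finset.range k) _ _ diag
    rw [Finset.card_range, nsmul_eq_mul] at this
    refine this.trans (le_of_eq ?_)
    field_simp
  have total : ∑ i ∈ Finset.range k, ∑ j ∈ Finset.range k, |D i j|
      ≤ 9 / k + 16 * k ^ 3 * Gamma u := by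
    rw [Finset.sum_congr rfl split, Finset.sum_add_distrib, Finset.sum_add_distrib]
    have e : (9:ℝ) / k = 4 / k + 4 / k + 1 / k := by ring
    linarith
  rw [e0]
  refine (Finset.abs_sum_le_sum_abs _ _).trans (le_trans ?_ total)
  exact Finset.sum_le_sum fun i _ => Finset.abs_sum_le_sum_abs _ _

/-! ### Selection of a convergent subsequence -/

/-- Two functions with countably many discontinuities on an open set which agree at its rational
points agree on it off a countable set. -/
lemma countable_ne_of_eq_rat {s : Set ℝ} (hs : IsOpen s) {f g : ℝ → ℝ}
    (hf : {x | x ∈ s ∧ ¬ContinuousWithinAt f s x}.Countable)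
    (hg : {x | x ∈ s ∧ ¬ContinuousWithinAt g s x}.Countable)
    (h : ∀ q : ℚ, (q : ℝ) ∈ s → f q = g q) : {x | x ∈ s ∧ f x ≠ g x}.Countable := by
  refine (hf.union hg).mono ?_
  rintro x ⟨hx, hne⟩
  by_contra hc
  simp only [mem_union, mem_ofPred_eq, not_or, not_and, not_not] at hc
  have cf := hc.1 hx
  have cg := hc.2 hx
  apply hne
  have hcl : x ∈ closure (s ∩ range ((↑) : ℚ → ℝ)) :=
    Rat.denseRange_cast.open_subset_closure_inter hs hx
  have : (nhdsWithin x (s ∩ range ((↑) : ℚ → ℝ))).NeBot := mem_closure_iff_nhdsWithin_neBot.1 hcl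
  have tf := cf.mono_left (nhdsWithin_mono x (inter_subset_left (t := range ((↑) : ℚ → ℝ))))
  have tg := cg.mono_left (nhdsWithin_mono x (inter_subset_left (t := range ((↑) : ℚ → ℝ))))
  refine tendsto_nhds_unique tf (tg.congr' ?_)
  filter_upwards [self_mem_nhdsWithin] with z hz
  obtain ⟨hz, q, rfl⟩ := hz
  exact (h q hz).symm

lemma limsup_le_limsup_of_le_add {a b ε : ℕ → ℝ} (ha : ∀ n, a n ∈ Icc (0:ℝ) 1)
    (hb : ∀ n, b n ∈ Icc (0:ℝ) 1) (hε : Tendsto ε atTop (nhds 0)) (h : ∀ n, a n ≤ b n + ε n) :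
    limsup a atTop ≤ limsup b atTop ∧ liminf a atTop ≤ liminf b atTop := by
  have bb : ∀ c : ℕ → ℝ, (∀ n, c n ∈ Icc (0:ℝ) 1) → ∀ δ : ℝ,
      IsBoundedUnder (· ≤ ·) atTop (fun n => c n + δ) ∧
      IsBoundedUnder (· ≥ ·) atTop (fun n => c n + δ) := fun c hc δ =>
    ⟨isBoundedUnder_of ⟨1 + δ, fun n => by linarith [(hc n).2]⟩,
      isBoundedUnder_of ⟨0 + δ, fun n => by
        show 0 + δ ≤ c n + δ
        linarith [(hc n).1]⟩⟩
  have ba := bb a ha 0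
  simp only [add_zero] at ba
  have bb0 := bb b hb 0
  simp only [add_zero] at bb0
  constructor <;>
  · refine le_of_forall_pos_le_add fun δ hδ => ?_
    have ev : ∀ᶠ n in atTop, a n ≤ b n + δ := by
      filter_upwards [hε.eventually_lt_const hδ] with n hn
      linarith [h n]
    first
    | exact (limsup_le_limsup ev ba.2.isCoboundedUnder_le (bb b hb δ).1).trans
        (limsup_add_const atTop b δ bb0.1 bb0.2.isCoboundedUnder_le).le
    | exact (liminf_le_liminf ev ba.2 (bb b hb δ).1.isCoboundedUnder_ge).trans
        (liminf_add_const atTop b δ bb0.1.isCoboundedUnder_ge bb0.2).le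

/-- A selection theorem of Helly type: kernels which are Robinson up to errors tending to `0` have a
subsequence converging almost everywhere to a Robinson kernel. -/
lemma exists_subseq_tendsto {R : ℕ → ℝ → ℝ → ℝ} (hR : ∀ n, BddKernel (R n)) {ε : ℕ → ℝ}
    (hε : Tendsto ε atTop (nhds 0))
    (hrob : ∀ n x y z, x ≤ y → y ≤ z → R n x z ≤ R n x y + ε n ∧ R n x z ≤ R n y z + ε n) :
    ∃ (φ : ℕ → ℕ) (u : ℝ → ℝ → ℝ), StrictMono φ ∧ BddKernel u ∧ IsRobinson u ∧
      ∀ᵐ p : ℝ × ℝ ∂(volume.prod volume),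
        Tendsto (fun n => R (φ n) p.1 p.2) atTop (nhds (u p.1 p.2)) := by
  have hmem : ∀ n x y, R n x y ∈ Icc (0:ℝ) 1 := fun n x y => ⟨(hR n).nonneg x y, (hR n).le_one x y⟩
  -- Convergence at all pairs of rationals, by compactness of a countable product.
  obtain ⟨a, -, φ, hφ, ha⟩ := (isCompact_univ_pi fun _ : ℚ × ℚ => isCompact_Icc (a := (0:ℝ)) (b := 1)
    ).tendsto_subseq (x := fun n (q : ℚ × ℚ) => R n q.1 q.2) (fun n q _ => hmem n q.1 q.2)
  rw [tendsto_pi_nhds] at ha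
  set U : ℝ → ℝ → ℝ := fun x y => limsup (fun n => R (φ n) x y) atTop with hU
  set L : ℝ → ℝ → ℝ := fun x y => liminf (fun n => R (φ n) x y) atTop with hL
  have bdA : ∀ x y, IsBoundedUnder (· ≤ ·) atTop (fun n => R (φ n) x y) := fun x y =>
    isBoundedUnder_of ⟨1, fun n => (hmem _ x y).2⟩
  have bdB : ∀ x y, IsBoundedUnder (· ≥ ·) atTop (fun n => R (φ n) x y) := fun x y =>
    isBoundedUnder_of ⟨0, fun n => (hmem _ x y).1⟩
  have hrat : ∀ p q : ℚ, L p q = U p q := fun p q =>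
    (ha (p, q)).liminf_eq.trans (ha (p, q)).limsup_eq.symm
  have hUs : ∀ x y, U x y = U y x := fun x y => by simp only [hU, (hR _).symm x y]
  have hLs : ∀ x y, L x y = L y x := fun x y => by simp only [hL, (hR _).symm x y]
  have hε' := hε.comp hφ.tendsto_atTop
  have hr1 : ∀ x y z, x ≤ y → y ≤ z → U x z ≤ U x y ∧ L x z ≤ L x y := fun x y z h1 h2 =>
    limsup_le_limsup_of_le_add (fun n => hmem _ _ _) (fun n => hmem _ _ _) hε'
      fun n => (hrob (φ n) x y z h1 h2).1
  have hr2 : ∀ x y z, x ≤ y → y ≤ z → U x z ≤ U y z ∧ L x z ≤ L y z := fun x y z h1 h2 =>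
    limsup_le_limsup_of_le_add (fun n => hmem _ _ _) (fun n => hmem _ _ _) hε'
      fun n => (hrob (φ n) x y z h1 h2).2
  have hUm : Measurable (Function.uncurry U) :=
    Measurable.limsup (f := fun n p => Function.uncurry (R (φ n)) p) fun n => (hR (φ n)).meas
  have hLm : Measurable (Function.uncurry L) :=
    Measurable.liminf (f := fun n p => Function.uncurry (R (φ n)) p) fun n => (hR (φ n)).meas
  -- On the horizontal line at height `y`, both `L` and `U` are monotone on either side of `y`.
  have line : ∀ y : ℝ, (∀ p : ℚ, (p:ℝ) ≠ y → L p y = U p y) →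
      {x | x ≠ y ∧ L x y ≠ U x y}.Countable := by
    intro y hy
    have c1 := countable_ne_of_eq_rat (isOpen_Iio (a := y)) (f := fun x => L x y)
      (g := fun x => U x y)
      (MonotoneOn.countable_not_continuousWithinAt
        fun x _ x' hx' hxx => (hr2 x x' y hxx (le_of_lt hx')).2)
      (MonotoneOn.countable_not_continuousWithinAt
        fun x _ x' hx' hxx => (hr2 x x' y hxx (le_of_lt hx')).1)
      (fun q hq => hy q (ne_of_lt hq))
    have c2 := countable_ne_of_eq_rat (isOpen_Ioi (a := y)) (f := fun x => L x y)
      (g := fun x => U x y)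
      (AntitoneOn.countable_not_continuousWithinAt
        fun x hx x' _ hxx => by
          simp only [hLs _ y]
          exact (hr1 y x x' (le_of_lt hx) hxx).2)
      (AntitoneOn.countable_not_continuousWithinAt
        fun x hx x' _ hxx => by
          simp only [hUs _ y]
          exact (hr1 y x x' (le_of_lt hx) hxx).1)
      (fun q hq => hy q (ne_of_gt hq))
    refine (c1.union c2).mono ?_
    rintro x ⟨hxy, hne⟩
    rcases lt_or_gt_of_ne hxy with h | h
    · exact Or.inl ⟨h, hne⟩
    · exact Or.inr ⟨h, hne⟩
  -- The lines at rational heights come first; by symmetry they give agreement at the rational points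
  -- of almost every line, and hence almost everywhere on that line.
  have hE : (⋃ q : ℚ, {x : ℝ | x ≠ q ∧ L x q ≠ U x q}).Countable :=
    countable_iUnion fun q => line q fun p _ => hrat p q
  have hae : ∀ᵐ p : ℝ × ℝ ∂(volume.prod volume), L p.1 p.2 = U p.1 p.2 := by
    have hms : MeasurableSet {p : ℝ × ℝ | L p.1 p.2 = U p.1 p.2} := measurableSet_eq_fun hLm hUm
    rw [Measure.ae_prod_iff_ae_ae hms]
    filter_upwards [hE.ae_notMem volume] with y hy
    simp only [mem_iUnion, mem_ofPred_eq, not_exists, not_and, not_not] at hy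
    have hc := line y fun p hp => by
      rw [hLs, hUs]
      exact hy p hp.symm
    filter_upwards [hc.ae_notMem volume, (countable_singleton y).ae_notMem volume] with x hx hxy
    simp only [not_and, not_not] at hx
    rw [hLs, hUs]
    exact hx hxy
  refine ⟨φ, U, hφ, ⟨hUm, hUs, fun x y => ?_, fun x y => ?_⟩, ?_, ?_⟩
  · exact le_limsup_of_frequently_le
      (Eventually.frequently (Eventually.of_forall fun n => (hmem _ x y).1)) (bdA x y)
  · exact limsup_le_of_le (bdB x y).isCoboundedUnder_le
      (Eventually.of_forall fun n => (hmem _ x y).2)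
  · exact fun x y z _ h1 h2 _ => le_min (hr1 x y z h1 h2).1 (hr2 x y z h1 h2).1
  · filter_upwards [hae] with p hp
    exact tendsto_of_liminf_eq_limsup hp rfl (bdA _ _) (bdB _ _)

lemma rectInt_sub {u v : ℝ → ℝ → ℝ} (hu : BddKernel u) (hv : BddKernel v) {S T : Set ℝ}
    (hS : S ⊆ Icc 0 1) (hT : T ⊆ Icc 0 1) :
    ∫ x in S, ∫ y in T, (u x y - v x y) = rectInt u S T - rectInt v S T := by
  have h : ∀ {u : ℝ → ℝ → ℝ}, BddKernel u → ∀ x, IntegrableOn (u x) T := fun hu x =>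
    integrableOn_of_bdd (hu.meas.comp measurable_prodMk_left) 1 (hu.abs_le x) hT
  have h' : ∀ {u : ℝ → ℝ → ℝ}, BddKernel u → IntegrableOn (fun x => ∫ y in T, u x y) S := fun hu =>
    integrableOn_of_bdd (measurable_inner hu.meas) 1 (fun x => abs_inner_le' (hu.abs_le x) hT) hS
  simp only [integral_sub (h hu _) (h hv _)]
  rw [integral_sub (h' hu) (h' hv)]
  rfl

lemma rectInt_sub_le_L1 {u v : ℝ → ℝ → ℝ} (hu : BddKernel u) (hv : BddKernel v) {S T : Set ℝ}
    (hS : S ⊆ Icc 0 1) (hT : T ⊆ Icc 0 1) :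
    |rectInt u S T - rectInt v S T| ≤
      ∫ p in Icc (0:ℝ) 1 ×ˢ Icc (0:ℝ) 1, |u p.1 p.2 - v p.1 p.2| ∂(volume.prod volume) := by
  have hm : Measurable (Function.uncurry fun x y => u x y - v x y) := hu.meas.sub hv.meas
  have hb : ∀ x y, |u x y - v x y| ≤ 1 := fun x y =>
    abs_le.2 ⟨by linarith [hu.nonneg x y, hv.le_one x y], by linarith [hv.nonneg x y, hu.le_one x y]⟩
  have h1 := integrable_prod_of_bdd hm 1 hb hS hT
  have h2 := integrable_prod_of_bdd hm 1 hb le_rfl le_rfl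
  have e := integral_prod _ h1
  simp only [Function.uncurry_apply_pair] at e
  rw [← rectInt_sub hu hv hS hT, ← e]
  rw [Measure.prod_restrict] at h1 h2 ⊢
  rw [← Real.norm_eq_abs]
  refine (norm_integral_le_integral_norm _).trans ?_
  exact setIntegral_mono_set h2.norm (Eventually.of_forall fun p => norm_nonneg _)
    (LE.le.eventuallyLE (prod_mono hS hT))

/-- Kernels with rapidly decreasing `Γ` accumulate, in cut norm, at a Robinson kernel. -/
lemma exists_robinson_limit {v : ℕ → ℝ → ℝ → ℝ} (hv : ∀ n, BddKernel (v n))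
    (hG : ∀ n : ℕ, Gamma (v n) ≤ 1 / ((n:ℝ) + 1) ^ 4) :
    ∃ u : ℝ → ℝ → ℝ, BddKernel u ∧ IsRobinson u ∧ ∀ ε > 0, ∃ n, ∀ S T : Set ℝ,
      MeasurableSet S → MeasurableSet T → S ⊆ Icc 0 1 → T ⊆ Icc 0 1 →
        |rectInt u S T - rectInt (v n) S T| ≤ ε := by
  have hlim := tendsto_one_div_add_atTop_nhds_zero_nat (𝕜 := ℝ)
  have hk3 : ∀ n : ℕ, ((n + 1 : ℕ) : ℝ) ^ 3 * Gamma (v n) ≤ 1 / ((n:ℝ) + 1) := by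
    intro n
    have h0 : (0:ℝ) < (n:ℝ) + 1 := by positivity
    push_cast
    calc ((n:ℝ) + 1) ^ 3 * Gamma (v n) ≤ ((n:ℝ) + 1) ^ 3 * (1 / ((n:ℝ) + 1) ^ 4) := by
          gcongr
          exact hG n
      _ = 1 / ((n:ℝ) + 1) := by field_simp
  set R : ℕ → ℝ → ℝ → ℝ := fun n => stepKernel (v n) (n + 1) with hRdef
  have hR : ∀ n, BddKernel (R n) := fun n => stepKernel_bdd (hv n) n.succ_pos
  obtain ⟨φ, u, hφ, hu, hrob, hae⟩ := exists_subseq_tendsto hR hlim (fun n x y z h1 h2 => by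
    have h := stepKernel_robinson (hv n) n.succ_pos h1 h2
    have := hk3 n
    exact ⟨h.1.trans (by gcongr), h.2.trans (by gcongr)⟩)
  refine ⟨u, hu, hrob, fun ε hε => ?_⟩
  have hL1 : Tendsto (fun n => ∫ p in Icc (0:ℝ) 1 ×ˢ Icc (0:ℝ) 1,
      |u p.1 p.2 - R (φ n) p.1 p.2| ∂(volume.prod volume)) atTop (nhds 0) := by
    have hfin : IsFiniteMeasure ((volume.prod volume).restrict (Icc (0:ℝ) 1 ×ˢ Icc (0:ℝ) 1)) := by
      have := finite_restrict (le_refl (Icc (0:ℝ) 1))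
      rw [← Measure.prod_restrict]
      infer_instance
    have := tendsto_integral_of_dominated_convergence
      (μ := (volume.prod volume).restrict (Icc (0:ℝ) 1 ×ˢ Icc (0:ℝ) 1))
      (F := fun n p => |u p.1 p.2 - R (φ n) p.1 p.2|) (f := fun _ => (0:ℝ)) (fun _ => 1)
      (fun n => by
        have : Measurable fun p => |Function.uncurry u p - Function.uncurry (R (φ n)) p| := by
          have := (hu.meas.sub (hR (φ n)).meas).norm
          exact this
        exact this.aestronglyMeasurable) (integrable_const _)
      (fun n => Eventually.of_forall fun p => by
        rw [Real.norm_eq_abs, abs_abs]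
        have a := hu.nonneg p.1 p.2
        have b := hu.le_one p.1 p.2
        have c := (hR (φ n)).nonneg p.1 p.2
        have d := (hR (φ n)).le_one p.1 p.2
        exact abs_le.2 ⟨by linarith, by linarith⟩)
      (by
        filter_upwards [ae_restrict_of_ae hae] with p hp
        have := (tendsto_const_nhds (x := u p.1 p.2)).sub hp
        rw [sub_self] at this
        simpa using this.abs)
    simpa using this
  have hlim2 := (hlim.comp hφ.tendsto_atTop).const_mul 25
  rw [mul_zero] at hlim2
  obtain ⟨n, hn1, hn2⟩ := ((hL1.eventually_lt_const (half_pos hε)).and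
    (hlim2.eventually_lt_const (half_pos hε))).exists
  refine ⟨φ n, fun S T hS hT hS1 hT1 => ?_⟩
  have a := (rectInt_sub_le_L1 hu (hR (φ n)) hS1 hT1).trans hn1.le
  have b := rectInt_sub_stepKernel_le (hv (φ n)) (φ n).succ_pos hS hT hS1 hT1
  have c := hk3 (φ n)
  have d : (9:ℝ) / ((φ n + 1 : ℕ) : ℝ) = 9 * (1 / ((φ n : ℝ) + 1)) := by push_cast; ring
  simp only [Function.comp_apply] at hn2
  have b' : |rectInt (v (φ n)) S T - rectInt (R (φ n)) S T| ≤ ε / 2 := by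
    refine b.trans ?_
    simp only [Nat.succ_eq_add_one]
    rw [d]
    linarith
  have := abs_sub_le (rectInt u S T) (rectInt (R (φ n)) S T) (rectInt (v (φ n)) S T)
  rw [abs_sub_comm (rectInt (R (φ n)) S T)] at this
  linarith

/-! ### Cut norm and cut distance -/

/-- The kernel `w` with its values truncated to `[0,1]`.  A graphon agrees with its truncation on the
unit square, and off it the values are irrelevant. -/
noncomputable def clamp (w : ℝ → ℝ → ℝ) (x y : ℝ) : ℝ := max 0 (min 1 (w x y))

lemma clamp_bdd {w : ℝ → ℝ → ℝ} (hw : IsGraphon w) : BddKernel (clamp w) where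
  meas := measurable_const.max (measurable_const.min hw.1)
  symm x y := by simp only [clamp, hw.2.1 x y]
  nonneg x y := le_max_left _ _
  le_one x y := max_le zero_le_one (min_le_left _ _)

lemma clamp_eq {w : ℝ → ℝ → ℝ} (hw : IsGraphon w) {x y : ℝ} (hx : x ∈ Icc (0:ℝ) 1)
    (hy : y ∈ Icc (0:ℝ) 1) : clamp w x y = w x y := by
  have := hw.2.2 x y hx hy
  rw [clamp, min_eq_right this.2, max_eq_right this.1]

lemma Gamma_congr {u v : ℝ → ℝ → ℝ}
    (h : ∀ x ∈ Icc (0:ℝ) 1, ∀ y ∈ Icc (0:ℝ) 1, u x y = v x y) : Gamma u = Gamma v := by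
  have key : ∀ A : Set ℝ, MeasurableSet A → A ⊆ Icc 0 1 → gammaA u A = gammaA v A := by
    intro A hA hA1
    refine setIntegral_congr_fun measurableSet_Icc fun y hy => ?_
    refine setIntegral_congr_fun measurableSet_Icc fun z hz => ?_
    have e1 : ∫ x in A ∩ Icc 0 y, (u x z - u x y) = ∫ x in A ∩ Icc 0 y, (v x z - v x y) :=
      setIntegral_congr_fun (hA.inter measurableSet_Icc) fun x hx => by
        simp only [h x (hA1 hx.1) z hz, h x (hA1 hx.1) y hy]
    have e2 : ∫ x in A ∩ Icc z 1, (u x y - u x z) = ∫ x in A ∩ Icc z 1, (v x y - v x z) :=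
      setIntegral_congr_fun (hA.inter measurableSet_Icc) fun x hx => by
        simp only [h x (hA1 hx.1) z hz, h x (hA1 hx.1) y hy]
    simp only [e1, e2]
  unfold Gamma
  congr 1
  ext r
  constructor
  · rintro ⟨A, h1, h2, rfl⟩
    exact ⟨A, h1, h2, key A h1 h2⟩
  · rintro ⟨A, h1, h2, rfl⟩
    exact ⟨A, h1, h2, (key A h1 h2).symm⟩

lemma cutNorm_nonneg (w : ℝ → ℝ → ℝ) : 0 ≤ cutNorm w := by
  apply Real.sSup_nonneg
  rintro r ⟨S, T, -, -, -, -, rfl⟩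
  exact abs_nonneg _

lemma cutDist_nonneg (u w : ℝ → ℝ → ℝ) : 0 ≤ cutDist u w := by
  apply Real.sInf_nonneg
  rintro r ⟨φ, -, -, rfl⟩
  exact cutNorm_nonneg _

lemma le_cutNorm {d : ℝ → ℝ → ℝ} (hd : ∀ x ∈ Icc (0:ℝ) 1, ∀ y ∈ Icc (0:ℝ) 1, |d x y| ≤ 1)
    {S T : Set ℝ} (hS : MeasurableSet S) (hT : MeasurableSet T)
    (hS1 : S ⊆ Icc 0 1) (hT1 : T ⊆ Icc 0 1) :
    |∫ x in S, ∫ y in T, d x y| ≤ cutNorm d := by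
  refine le_csSup ⟨1, ?_⟩ ⟨S, T, hS, hT, hS1, hT1, rfl⟩
  rintro r ⟨S, T, -, -, hS, hT, rfl⟩
  have h1 : ∀ x ∈ S, ‖∫ y in T, d x y‖ ≤ 1 := fun x hx =>
    (norm_setIntegral_le_of_norm_le_const (volume_lt_top hT)
      fun y hy => hd x (hS hx) y (hT hy)).trans (by simpa using volReal_le_one hT)
  exact (norm_setIntegral_le_of_norm_le_const (volume_lt_top hS) h1).trans
    (by simpa using volReal_le_one hS)

lemma cutDist_self (w : ℝ → ℝ → ℝ) : cutDist w w = 0 := by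
  refine le_antisymm ?_ (cutDist_nonneg w w)
  refine csInf_le ⟨0, ?_⟩ ⟨id, MeasurePreserving.id _, bijOn_id _, ?_⟩
  · rintro r ⟨φ, -, -, rfl⟩
    exact cutNorm_nonneg _
  · refine le_antisymm (cutNorm_nonneg _) (Real.sSup_le ?_ le_rfl)
    rintro r ⟨S, T, -, -, -, -, rfl⟩
    simp

/-- Change of variables along a measure-preserving bijection of `[0,1]`; the image of `S` is
measurable by the Lusin–Souslin theorem. -/
lemma setIntegral_comp_bijOn {φ : ℝ → ℝ}
    (hφ : MeasurePreserving φ (volume.restrict (Icc 0 1)) (volume.restrict (Icc 0 1)))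
    (hb : BijOn φ (Icc 0 1) (Icc 0 1)) {S : Set ℝ} (hS : MeasurableSet S) (hS1 : S ⊆ Icc 0 1)
    {f : ℝ → ℝ} (hf : Measurable f) : ∫ x in S, f (φ x) = ∫ x in φ '' S, f x := by
  have hm : MeasurableSet (φ '' S) := hS.image_of_measurable_injOn hφ.measurable (hb.injOn.mono hS1)
  have hsub : φ '' S ⊆ Icc 0 1 := (image_mono hS1).trans hb.image_eq.subset
  have hmp := hφ.restrict_preimage hm
  have hpre : φ ⁻¹' (φ '' S) ∩ Icc 0 1 = S := by
    ext x
    constructor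
    · rintro ⟨⟨y, hy, hyx⟩, hx⟩
      rwa [← hb.injOn (hS1 hy) hx hyx]
    · exact fun hx => ⟨mem_image_of_mem φ hx, hS1 hx⟩
  rw [Measure.restrict_restrict (hφ.measurable hm), Measure.restrict_restrict hm, hpre,
    inter_eq_left.2 hsub] at hmp
  rw [← hmp.map_eq, integral_map hmp.measurable.aemeasurable hf.aestronglyMeasurable]

lemma rectInt_comp {u : ℝ → ℝ → ℝ} (hu : BddKernel u) {φ : ℝ → ℝ}
    (hφ : MeasurePreserving φ (volume.restrict (Icc 0 1)) (volume.restrict (Icc 0 1)))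
    (hb : BijOn φ (Icc 0 1) (Icc 0 1)) {S T : Set ℝ} (hS : MeasurableSet S) (hS1 : S ⊆ Icc 0 1)
    (hT : MeasurableSet T) (hT1 : T ⊆ Icc 0 1) :
    rectInt (fun x y => u (φ x) (φ y)) S T = rectInt u (φ '' S) (φ '' T) := by
  unfold rectInt
  have h : ∀ x, ∫ y in T, u (φ x) (φ y) = ∫ y in φ '' T, u (φ x) y := fun x =>
    setIntegral_comp_bijOn hφ hb hT hT1 (hu.meas.comp measurable_prodMk_left)
  simp only [h]
  exact setIntegral_comp_bijOn hφ hb hS hS1 (f := fun x => ∫ y in φ '' T, u x y)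
    (measurable_inner hu.meas)

lemma BddKernel.comp {u : ℝ → ℝ → ℝ} (hu : BddKernel u) {φ : ℝ → ℝ} (hφ : Measurable φ) :
    BddKernel fun x y => u (φ x) (φ y) where
  meas := hu.meas.comp ((hφ.comp measurable_fst).prodMk (hφ.comp measurable_snd))
  symm _ _ := hu.symm _ _
  nonneg _ _ := hu.nonneg _ _
  le_one _ _ := hu.le_one _ _

lemma setIntegral_sub_eq {a b a' b' : ℝ → ℝ → ℝ} (ha' : BddKernel a') (hb' : BddKernel b')
    (ha : ∀ x ∈ Icc (0:ℝ) 1, ∀ y ∈ Icc (0:ℝ) 1, a' x y = a x y)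
    (hb : ∀ x ∈ Icc (0:ℝ) 1, ∀ y ∈ Icc (0:ℝ) 1, b' x y = b x y) {S T : Set ℝ}
    (hS : MeasurableSet S) (hT : MeasurableSet T) (hS1 : S ⊆ Icc 0 1) (hT1 : T ⊆ Icc 0 1) :
    ∫ x in S, ∫ y in T, (a x y - b x y) = rectInt a' S T - rectInt b' S T := by
  rw [← rectInt_sub ha' hb' hS1 hT1]
  refine setIntegral_congr_fun hS fun x hx => setIntegral_congr_fun hT fun y hy => ?_
  simp only [ha x (hS1 hx) y (hT1 hy), hb x (hS1 hx) y (hT1 hy)]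

/-- If `u` is a cut-norm accumulation point of kernels at cut distance `0` from `w`, then it is at cut
distance `0` from `w`. -/
lemma cutDist_eq_zero_of_limit {w u : ℝ → ℝ → ℝ} (hw : IsGraphon w) (hu : BddKernel u)
    {v : ℕ → ℝ → ℝ → ℝ} (hv : ∀ n, IsGraphon (v n)) (hd : ∀ n, cutDist (v n) w = 0)
    (hlim : ∀ ε > 0, ∃ n, ∀ S T : Set ℝ,
      MeasurableSet S → MeasurableSet T → S ⊆ Icc 0 1 → T ⊆ Icc 0 1 →
        |rectInt u S T - rectInt (clamp (v n)) S T| ≤ ε) : cutDist u w = 0 := by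
  refine le_antisymm (le_of_forall_pos_le_add fun ε hε => ?_) (cutDist_nonneg u w)
  obtain ⟨n, hn⟩ := hlim (ε / 2) (half_pos hε)
  have hlt : cutDist (v n) w < ε / 2 := by
    rw [hd n]
    exact half_pos hε
  obtain ⟨r, ⟨φ, hφ, hb, rfl⟩, hr⟩ := exists_lt_of_csInf_lt
    (by exact ⟨_, id, MeasurePreserving.id _, bijOn_id _, rfl⟩) hlt
  have hcv := clamp_bdd (hv n)
  have hcw := clamp_bdd hw
  have hve : ∀ x ∈ Icc (0:ℝ) 1, ∀ y ∈ Icc (0:ℝ) 1, clamp (v n) (φ x) (φ y) = v n (φ x) (φ y) :=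
    fun x hx y hy => clamp_eq (hv n) (hb.mapsTo hx) (hb.mapsTo hy)
  have hwe : ∀ x ∈ Icc (0:ℝ) 1, ∀ y ∈ Icc (0:ℝ) 1, clamp w x y = w x y :=
    fun x hx y hy => clamp_eq hw hx hy
  have hle : cutDist u w ≤ cutNorm (fun x y => u (φ x) (φ y) - w x y) := by
    refine csInf_le ⟨0, ?_⟩ ⟨φ, hφ, hb, rfl⟩
    rintro r ⟨φ, -, -, rfl⟩
    exact cutNorm_nonneg _
  refine hle.trans (Real.sSup_le ?_ (by linarith))
  rintro r ⟨S, T, hS, hT, hS1, hT1, rfl⟩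
  have m : ∀ {S : Set ℝ}, MeasurableSet S → S ⊆ Icc 0 1 → MeasurableSet (φ '' S) := fun hS hS1 =>
    hS.image_of_measurable_injOn hφ.measurable (hb.injOn.mono hS1)
  have s : ∀ {S : Set ℝ}, S ⊆ Icc 0 1 → φ '' S ⊆ Icc 0 1 := fun hS1 =>
    (image_mono hS1).trans hb.image_eq.subset
  have e1 := setIntegral_sub_eq (hu.comp hφ.measurable) hcw (fun _ _ _ _ => rfl) hwe hS hT hS1 hT1
  have e2 := setIntegral_sub_eq (hcv.comp hφ.measurable) hcw hve hwe hS hT hS1 hT1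
  rw [rectInt_comp hu hφ hb hS hS1 hT hT1] at e1
  rw [rectInt_comp hcv hφ hb hS hS1 hT hT1] at e2
  have b1 := hn _ _ (m hS hS1) (m hT hT1) (s hS1) (s hT1)
  have b2 := (le_cutNorm (d := fun x y => v n (φ x) (φ y) - w x y) (fun x hx y hy => by
    rw [← hve x hx y hy, ← hwe x hx y hy]
    have a := hcv.nonneg (φ x) (φ y)
    have b := hcv.le_one (φ x) (φ y)
    have c := hcw.nonneg x y
    have d := hcw.le_one x y
    exact abs_le.2 ⟨by linarith, by linarith⟩) hS hT hS1 hT1).trans hr.le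
  rw [e2] at b2
  rw [e1]
  have := abs_sub_le (rectInt u (φ '' S) (φ '' T)) (rectInt (clamp (v n)) (φ '' S) (φ '' T))
    (rectInt (clamp w) S T)
  linarith

/-! ### The two implications -/

/-- For a Robinson kernel both positive parts in the definition of `Γ` vanish identically. -/
lemma Gamma_eq_zero_of_isRobinson {u : ℝ → ℝ → ℝ} (hu : IsRobinson u)
    (hs : ∀ x y, u x y = u y x) : Gamma u = 0 := by
  refine le_antisymm (Real.sSup_le ?_ le_rfl) (Gamma_nonneg u)
  rintro r ⟨A, hA, hA1, rfl⟩
  apply le_of_eq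
  have h : ∀ y ∈ Icc (0:ℝ) 1, ∀ z ∈ Icc (0:ℝ) 1, gammaFun u A y z = 0 := by
    intro y hy z hz
    unfold gammaFun
    split_ifs with hyz
    · have h1 : ∫ x in A ∩ Icc 0 y, (u x z - u x y) ≤ 0 :=
        setIntegral_nonpos (hA.inter measurableSet_Icc) fun x hx => by
          have := (hu x y z hx.2.1 hx.2.2 hyz.le hz.2).trans (min_le_left _ _)
          linarith
      have h2 : ∫ x in A ∩ Icc z 1, (u x y - u x z) ≤ 0 :=
        setIntegral_nonpos (hA.inter measurableSet_Icc) fun x hx => by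
          have := (hu y z x hy.1 hyz.le hx.2.1 hx.2.2).trans (min_le_right _ _)
          rw [hs x y, hs x z]
          linarith
      rw [max_eq_right h1, max_eq_right h2, add_zero]
    · rfl
  change ∫ y in Icc (0:ℝ) 1, ∫ z in Icc (0:ℝ) 1, gammaFun u A y z = 0
  rw [setIntegral_congr_fun measurableSet_Icc
    fun y hy => setIntegral_congr_fun measurableSet_Icc (h y hy)]
  simp

lemma gammaTilde_eq_zero_of_robinson {w u : ℝ → ℝ → ℝ} (hu : IsGraphon u) (hr : IsRobinson u)
    (hd : cutDist u w = 0) : gammaTilde w = 0 := by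
  have h0 : ∀ r ∈ {r : ℝ | ∃ u : ℝ → ℝ → ℝ, IsGraphon u ∧ cutDist u w = 0 ∧ r = Gamma u}, 0 ≤ r := by
    rintro r ⟨v, -, -, rfl⟩
    exact Gamma_nonneg v
  exact le_antisymm (csInf_le ⟨0, h0⟩ ⟨u, hu, hd, (Gamma_eq_zero_of_isRobinson hr hu.2.1).symm⟩)
    (Real.sInf_nonneg h0)

/-- A minimising sequence for `Γ̃(w)` accumulates at a Robinson graphon, which is still at cut
distance `0` from `w`. -/
lemma exists_robinson_of_gammaTilde_eq_zero {w : ℝ → ℝ → ℝ} (hw : IsGraphon w)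
    (h : gammaTilde w = 0) : ∃ u : ℝ → ℝ → ℝ, IsGraphon u ∧ IsRobinson u ∧ cutDist u w = 0 := by
  have hex : ∀ n : ℕ, ∃ v : ℝ → ℝ → ℝ, IsGraphon v ∧ cutDist v w = 0 ∧
      Gamma v ≤ 1 / ((n:ℝ) + 1) ^ 4 := by
    intro n
    have hlt : gammaTilde w < 1 / ((n:ℝ) + 1) ^ 4 := by
      rw [h]
      positivity
    -- The infimum is not a junk value: `w` itself is a competitor.
    obtain ⟨r, ⟨v, hv, hd, rfl⟩, hr⟩ :=
      exists_lt_of_csInf_lt (by exact ⟨_, w, hw, cutDist_self w, rfl⟩) hlt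
    exact ⟨v, hv, hd, hr.le⟩
  choose v hv hd hG using hex
  obtain ⟨u, hu, hr, hlim⟩ := exists_robinson_limit (v := fun n => clamp (v n))
    (fun n => clamp_bdd (hv n))
    (fun n => (Gamma_congr fun x hx y hy => clamp_eq (hv n) hx hy).trans_le (hG n))
  exact ⟨u, hu.isGraphon, hr, cutDist_eq_zero_of_limit hw hu hv hd hlim⟩

/-- `Γ̃(w) = 0` iff `w` is Robinsonian; and in that case the infimum defining `Γ̃(w)`
is attained (by a graphon `u` with `δ_□(u,w) = 0` and `Γ(u) = 0`). -/
theorem gammaTilde_eq_zero_iff_robinsonian (w : ℝ → ℝ → ℝ) (hw : IsGraphon w) :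
    (gammaTilde w = 0 ↔
      ∃ u : ℝ → ℝ → ℝ, IsGraphon u ∧ IsRobinson u ∧ cutDist u w = 0) ∧
    (gammaTilde w = 0 →
      ∃ u : ℝ → ℝ → ℝ, IsGraphon u ∧ cutDist u w = 0 ∧ Gamma u = 0) := by
  refine ⟨⟨exists_robinson_of_gammaTilde_eq_zero hw, ?_⟩, fun h => ?_⟩
  · rintro ⟨u, hu, hr, hd⟩
    exact gammaTilde_eq_zero_of_robinson hu hr hd
  · obtain ⟨u, hu, hr, hd⟩ := exists_robinson_of_gammaTilde_eq_zero hw h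
    exact ⟨u, hu, hd, Gamma_eq_zero_of_isRobinson hr hu.2.1⟩
end

section
/- Let w be a graphon for which there exist measurable sets S,T ⊆ [0,1] of positive measure and a constant p ∈ (0,1) such that w = p almost everywhere on S×T. Then there exist constants c, α > 0, depending only on p and min(|S|,|T|), such that for all sufficiently large n, a random graph G ~ 𝔾(n,w) satisfies ℙ( Γ*(G) ≥ c·n^{−1/2} ) ≥ 1 − exp(−α n). -/
/-!
Consider the following event for the vertex sets `S'`, `T'` of labels lying in `S`, `T`: both
have linear size, and `|e(U, L) - p|U||L|| ≤ 2n^{3/2}` for all disjoint `U ⊆ S'`, `L ⊆ T'`. It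
fails with exponentially small probability (`measure_bad_le`): edges between `U` and `L` are
independent coins of bias `p`, so Hoeffding's inequality gives a failure probability `2e^{-8n}` for
one pair, which survives a union bound over the at most `4ⁿ` pairs. On this event
`Γ* ≥ c n^{-1/2}` holds deterministically (`exists_gammaStar_ge`), for every order `≺`.

Fix `≺`. A median cut (`exists_separated`) provides linear-size `U ⊆ S'` and `L ⊆ T'`, one of
which precedes the other, so that for `A ⊆ L` and `u, v ∈ U` the truncations `D(u)`, `U(v)` in
`Γ*(G, ≺, A)` play no role. Low discrepancy places most degrees from `U` into `L` within `O(√n)` of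
their mean, so a positive proportion `W` of `U` has degrees agreeing up to `η√n`, for any chosen
small constant `η`. Low discrepancy also makes a typical pair `u, v ∈ W` disagree on linearly many
`x ∈ L`. For a uniformly random `A ⊆ L` put `t = |N(v) ∩ A| - |N(u) ∩ A|` and let `t'` be the same
difference for `L \ A`. Then `t - t'` is a random sign sum with linearly many nonzero terms, so
`𝔼|t - t'|` is of order `√n` by a second and fourth moment bound, while `|t + t'| ≤ η√n`
(`exists_window_signed_gap`). Since `[t]₊ + [t']₊ ≥ (|t - t'| - |t + t'|) / 2` and the right-hand
side does not depend on which of `u, v` comes first, averaging over `A` and summing over the pairs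
in `W` shows that some `A` has `Γ*(G, ≺, A)` of order at least `n² · √n / n³` (`gammaStarOrd_ge`).
-/

open MeasureTheory Set

/-- The uniform (Lebesgue) probability measure on `[0,1]`. -/
noncomputable def unif01 : Measure ℝ := volume.restrict (Icc 0 1)

/-- The sample space measure for the `w`-random graph `𝔾(n,w)`: i.i.d. uniform labels
`x_1, …, x_n` together with independent uniform `[0,1]` coins for the edges. -/
noncomputable def graphSampleMeasure (n : ℕ) :
    Measure ((Fin n → ℝ) × (Fin n → Fin n → ℝ)) :=
  (Measure.pi fun _ : Fin n => unif01).prod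
    (Measure.pi fun _ : Fin n => Measure.pi fun _ : Fin n => unif01)

open Classical in
/-- The adjacency matrix of the sampled graph `G ∼ 𝔾(n,w)`: for `i < j` the edge `{i,j}`
is present iff the corresponding uniform coin is at most `w(x_i, x_j)`. -/
noncomputable def sampleAdj (w : ℝ → ℝ → ℝ) (n : ℕ)
    (ω : (Fin n → ℝ) × (Fin n → Fin n → ℝ)) : Fin n → Fin n → Bool :=
  fun i j =>
    if i < j then decide (ω.2 i j ≤ w (ω.1 i) (ω.1 j))
    else if j < i then decide (ω.2 j i ≤ w (ω.1 j) (ω.1 i))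
    else false

open Classical in
/-- `Γ*(G, ≺, A)` where the linear order `≺` on the vertices is encoded by a
permutation `σ` (`u ≺ v` iff `σ u < σ v`). -/
noncomputable def gammaStarA (n : ℕ) (adj : Fin n → Fin n → Bool)
    (σ : Equiv.Perm (Fin n)) (A : Finset (Fin n)) : ℝ :=
  (1 / (n : ℝ) ^ 3) *
    ((∑ u : Fin n, ∑ v : Fin n,
        if σ u < σ v then
          max (((A.filter fun x => adj v x = true ∧ σ x < σ u).card : ℝ)
            - ((A.filter fun x => adj u x = true ∧ σ x < σ u).card : ℝ)) 0
        else 0)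
      + (∑ u : Fin n, ∑ v : Fin n,
        if σ u < σ v then
          max (((A.filter fun x => adj u x = true ∧ σ v < σ x).card : ℝ)
            - ((A.filter fun x => adj v x = true ∧ σ v < σ x).card : ℝ)) 0
        else 0))

/-- `Γ*(G, ≺) = max_A Γ*(G, ≺, A)`. -/
noncomputable def gammaStarOrd (n : ℕ) (adj : Fin n → Fin n → Bool)
    (σ : Equiv.Perm (Fin n)) : ℝ :=
  sSup {r : ℝ | ∃ A : Finset (Fin n), r = gammaStarA n adj σ A}

/-- `Γ*(G) = min_≺ Γ*(G, ≺)`, minimum over all linear orders of the vertex set. -/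
noncomputable def gammaStar (n : ℕ) (adj : Fin n → Fin n → Bool) : ℝ :=
  sInf {r : ℝ | ∃ σ : Equiv.Perm (Fin n), r = gammaStarOrd n adj σ}

/-! ### Moments of random sign sums -/

/-- Random sign sums are encoded by subsets `A`: elements of `A` get sign `+`, the others `-`. This
is the induction step, conditioning on the sign of a new element `a`. -/
theorem sum_powerset_insert_signed {V : Type*} [DecidableEq V] (f : V → ℝ) (φ : ℝ → ℝ)
    {a : V} {s : Finset V} (ha : a ∉ s) :
    ∑ A ∈ (insert a s).powerset, φ (∑ x ∈ insert a s, if x ∈ A then f x else -f x)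
      = ∑ A ∈ s.powerset, (φ (-f a + ∑ x ∈ s, if x ∈ A then f x else -f x)
        + φ (f a + ∑ x ∈ s, if x ∈ A then f x else -f x)) := by
  rw [Finset.sum_powerset_insert ha, ← Finset.sum_add_distrib]
  refine Finset.sum_congr rfl fun A hA => ?_
  have haA : a ∉ A := fun h => ha (Finset.mem_powerset.1 hA h)
  rw [Finset.sum_insert ha, if_neg haA, Finset.sum_insert ha,
    if_pos (Finset.mem_insert_self _ _)]
  congr 3
  refine Finset.sum_congr rfl fun x hx => ?_
  have : x ≠ a := fun h => ha (h ▸ hx)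
  simp [this]

theorem sum_powerset_signed_sq {V : Type*} [DecidableEq V] (f : V → ℝ) (L : Finset V) :
    ∑ A ∈ L.powerset, (∑ x ∈ L, if x ∈ A then f x else -f x) ^ 2
      = 2 ^ L.card * ∑ x ∈ L, f x ^ 2 := by
  induction L using Finset.induction_on with
  | empty => simp
  | insert a s ha ih =>
    rw [sum_powerset_insert_signed f (fun R => R ^ 2) ha, Finset.card_insert_of_notMem ha,
      Finset.sum_insert ha]
    have : ∀ R : ℝ, (-f a + R) ^ 2 + (f a + R) ^ 2 = 2 * R ^ 2 + 2 * f a ^ 2 := fun R => by ring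
    simp only [this, Finset.sum_add_distrib, ← Finset.mul_sum, ih, Finset.sum_const,
      Finset.card_powerset, nsmul_eq_mul]
    push_cast
    ring

/-- The fourth moment of a random sign sum is at most three times its squared variance. -/
theorem sum_powerset_signed_four {V : Type*} [DecidableEq V] (f : V → ℝ) (L : Finset V) :
    ∑ A ∈ L.powerset, (∑ x ∈ L, if x ∈ A then f x else -f x) ^ 4
      ≤ 3 * 2 ^ L.card * (∑ x ∈ L, f x ^ 2) ^ 2 := by
  induction L using Finset.induction_on with
  | empty => simp
  | insert a s ha ih =>
    rw [sum_powerset_insert_signed f (fun R => R ^ 4) ha, Finset.card_insert_of_notMem ha,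
      Finset.sum_insert ha]
    have : ∀ R : ℝ, (-f a + R) ^ 4 + (f a + R) ^ 4
        = 2 * R ^ 4 + 12 * f a ^ 2 * R ^ 2 + 2 * f a ^ 4 := fun R => by ring
    simp only [this, Finset.sum_add_distrib, ← Finset.mul_sum, Finset.sum_const,
      Finset.card_powerset, nsmul_eq_mul, sum_powerset_signed_sq]
    have h4 : 0 ≤ 2 ^ s.card * f a ^ 4 := by positivity
    push_cast
    rw [pow_succ (2 : ℝ)]
    nlinarith [ih, h4]

/-- A Khintchine-type lower bound: with `D = ∑ f²`, a random sign sum has mean absolute value at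
least `D/μ - 3D²/(4μ³)` for every scale `μ > 0`. It comes from integrating the pointwise inequality
`|R| ≥ R²/μ - R⁴/(4μ³)`. -/
theorem sum_powerset_abs_signed_ge {V : Type*} [DecidableEq V] (f : V → ℝ) (L : Finset V)
    (μ : ℝ) (hμ : 0 < μ) :
    2 ^ L.card * ((∑ x ∈ L, f x ^ 2) / μ - 3 * (∑ x ∈ L, f x ^ 2) ^ 2 / (4 * μ ^ 3))
      ≤ ∑ A ∈ L.powerset, |∑ x ∈ L, if x ∈ A then f x else -f x| := by
  have key : ∀ R : ℝ, R ^ 2 / μ - R ^ 4 / (4 * μ ^ 3) ≤ |R| := by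
    intro R
    obtain ⟨t, ht, hR⟩ : ∃ t : ℝ, 0 ≤ t ∧ |R| = t * μ := ⟨|R| / μ, by positivity, by field_simp⟩
    have h2 : R ^ 2 = t ^ 2 * μ ^ 2 := by rw [← sq_abs, hR]; ring
    have h4 : R ^ 4 = t ^ 4 * μ ^ 4 := by
      rw [show R ^ 4 = (R ^ 2) ^ 2 by ring, h2]; ring
    rw [h2, h4, hR]
    have : t ^ 2 * μ ^ 2 / μ - t ^ 4 * μ ^ 4 / (4 * μ ^ 3) = (t ^ 2 - t ^ 4 / 4) * μ := by
      field_simp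
    rw [this]
    refine mul_le_mul_of_nonneg_right ?_ hμ.le
    have h3 : 0 ≤ 1 - t + t ^ 3 / 4 := by
      nlinarith [mul_nonneg ht (sq_nonneg (t - 1)), sq_nonneg (t - 1), sq_nonneg (3 * t - 4),
        mul_nonneg ht (sq_nonneg (3 * t - 4))]
    nlinarith [mul_nonneg ht h3]
  refine le_trans ?_ (Finset.sum_le_sum fun A _ => key _)
  rw [Finset.sum_sub_distrib, ← Finset.sum_div, ← Finset.sum_div, sum_powerset_signed_sq]
  have h4 := div_le_div_of_nonneg_right (sum_powerset_signed_four f L)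
    (show 0 ≤ 4 * μ ^ 3 by positivity)
  have e : 2 ^ L.card * ((∑ x ∈ L, f x ^ 2) / μ - 3 * (∑ x ∈ L, f x ^ 2) ^ 2 / (4 * μ ^ 3))
    = 2 ^ L.card * (∑ x ∈ L, f x ^ 2) / μ
      - 3 * 2 ^ L.card * (∑ x ∈ L, f x ^ 2) ^ 2 / (4 * μ ^ 3) := by ring
  rw [e]
  linarith

/-- If all sub-sums of `g` over `U` are at most `B` in absolute value, the `ℓ¹` norm of `g` on `U`
is at most `2B`: split according to the sign of `g`. -/
theorem sum_abs_le_of_subset_sums {V : Type*} [DecidableEq V] (g : V → ℝ) (U : Finset V) (B : ℝ)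
    (h : ∀ U' ⊆ U, |∑ u ∈ U', g u| ≤ B) : ∑ u ∈ U, |g u| ≤ 2 * B := by
  rw [← Finset.sum_filter_add_sum_filter_not U (fun u => 0 ≤ g u)]
  have h1 := (abs_le.1 (h _ (Finset.filter_subset (fun u => 0 ≤ g u) U))).2
  have h2 := (abs_le.1 (h _ (Finset.filter_subset (fun u => ¬ 0 ≤ g u) U))).1
  have e1 : ∑ u ∈ U with 0 ≤ g u, |g u| = ∑ u ∈ U with 0 ≤ g u, g u :=
    Finset.sum_congr rfl fun u hu => abs_of_nonneg (Finset.mem_filter.1 hu).2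
  have e2 : ∑ u ∈ U with ¬ 0 ≤ g u, |g u| = -∑ u ∈ U with ¬ 0 ≤ g u, g u := by
    rw [← Finset.sum_neg_distrib]
    exact Finset.sum_congr rfl fun u hu => abs_of_neg (not_le.1 (Finset.mem_filter.1 hu).2)
  rw [e1, e2]
  linarith

/-! ### Degrees and disagreements under low discrepancy -/

theorem sum_pairs_sq_sub {V : Type*} (b : V → ℝ) (hb : ∀ u, b u = 0 ∨ b u = 1) (W : Finset V) :
    ∑ u ∈ W, ∑ v ∈ W, (b v - b u) ^ 2 = 2 * ((∑ u ∈ W, b u) * (W.card - ∑ u ∈ W, b u)) := by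
  have h : ∀ u v, (b v - b u) ^ 2 = b v + b u - 2 * (b u * b v) := by
    intro u v
    rcases hb u with h | h <;> rcases hb v with h' | h' <;> rw [h, h'] <;> norm_num
  simp only [h, Finset.sum_sub_distrib, Finset.sum_add_distrib, ← Finset.mul_sum,
    Finset.sum_const, nsmul_eq_mul, ← Finset.sum_mul]
  ring

/-- If the column sums of a `0/1` matrix over the rows `W` are close to `p|W|` in `ℓ¹`, then two
typical rows differ in a proportion about `2p(1-p)` of the columns. -/
theorem sum_pairs_dist_ge {V : Type*} (p : ℝ) (hp0 : 0 < p) (hp1 : p < 1) (a : V → V → ℝ)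
    (ha : ∀ u x, a u x = 0 ∨ a u x = 1) (W L : Finset V) :
    L.card * (2 * (p * (1 - p) * (W.card : ℝ) ^ 2))
        - 2 * W.card * ∑ x ∈ L, |∑ u ∈ W, a u x - p * W.card|
      ≤ ∑ u ∈ W, ∑ v ∈ W, ∑ x ∈ L, (a v x - a u x) ^ 2 := by
  have e : ∑ u ∈ W, ∑ v ∈ W, ∑ x ∈ L, (a v x - a u x) ^ 2
      = ∑ x ∈ L, 2 * ((∑ u ∈ W, a u x) * ((W.card : ℝ) - ∑ u ∈ W, a u x)) := by
    rw [Finset.sum_congr rfl fun u _ => Finset.sum_comm, Finset.sum_comm]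
    refine Finset.sum_congr rfl fun x _ => ?_
    exact sum_pairs_sq_sub (fun u => a u x) (fun u => ha u x) W
  have h1 : ∀ x ∈ L, 2 * (p * (1 - p) * W.card ^ 2) - 2 * W.card * |∑ u ∈ W, a u x - p * W.card|
      ≤ 2 * ((∑ u ∈ W, a u x) * ((W.card : ℝ) - ∑ u ∈ W, a u x)) := by
    intro x _
    obtain ⟨t, ht⟩ : ∃ t, t = ∑ u ∈ W, a u x := ⟨_, rfl⟩
    have ht0 : 0 ≤ t := by
      rw [ht]; exact Finset.sum_nonneg fun u _ => by rcases ha u x with h | h <;> rw [h]; norm_num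
    have hm0 : (0 : ℝ) ≤ W.card := by positivity
    have ht1 : t ≤ W.card := by
      rw [ht]
      have : ∑ u ∈ W, a u x ≤ ∑ u ∈ W, (1 : ℝ) :=
        Finset.sum_le_sum fun u _ => by rcases ha u x with h | h <;> rw [h]; norm_num
      simpa using this
    rw [← ht]
    have h2 : t * ((W.card : ℝ) - t) - p * (1 - p) * W.card ^ 2
        = (t - p * W.card) * ((1 - p) * W.card - t) := by ring
    have h3 : |(1 - p) * W.card - t| ≤ W.card := by rw [abs_le]; constructor <;> nlinarith
    have h4 : -(|t - p * W.card| * W.card) ≤ (t - p * W.card) * ((1 - p) * W.card - t) := by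
      refine le_trans (neg_le_neg ?_) (neg_abs_le _)
      rw [abs_mul]
      exact mul_le_mul_of_nonneg_left h3 (abs_nonneg _)
    linarith
  rw [e]
  refine le_trans (le_of_eq ?_) (Finset.sum_le_sum h1)
  rw [Finset.sum_sub_distrib, Finset.sum_const, nsmul_eq_mul, ← Finset.mul_sum]

set_option maxHeartbeats 1000000 in
/-- Deterministic core. Low discrepancy between `U` and `L` forces a linear-size `W ⊆ U` on which
the degrees into `L` agree up to a small multiple of `√n`, while the signed degrees of two vertices
of `W`, averaged over all splittings `L = A ∪ (L \ A)`, differ by a larger multiple of `√n`. -/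
theorem exists_window_signed_gap (p δ K : ℝ) (hp0 : 0 < p) (hp1 : p < 1) (hδ : 0 < δ)
    (hK : 0 < K) :
    ∃ c : ℝ, 0 < c ∧ ∃ N₀ : ℕ, ∀ n : ℕ, N₀ ≤ n → ∀ a : Fin n → Fin n → ℝ,
      (∀ u x, a u x = 0 ∨ a u x = 1) → ∀ U L : Finset (Fin n),
      δ * n ≤ U.card → δ * n ≤ L.card →
      (∀ U' ⊆ U, ∀ L' ⊆ L,
        |∑ u ∈ U', ∑ x ∈ L', a u x - p * (U'.card * L'.card)| ≤ K * (n * √n)) →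
      ∃ W ⊆ U, c * ((n : ℝ) ^ 2 * √n) * 2 ^ L.card ≤
        ∑ A ∈ L.powerset, ∑ u ∈ W, ∑ v ∈ W,
          (|∑ x ∈ L, if x ∈ A then a v x - a u x else -(a v x - a u x)|
            - |∑ x ∈ L, (a v x - a u x)|) := by
  obtain ⟨q, hq⟩ : ∃ q, q = p * (1 - p) := ⟨_, rfl⟩
  have hq0 : 0 < q := by rw [hq]; exact mul_pos hp0 (by linarith)
  obtain ⟨d, hd⟩ : ∃ d, d = δ * q := ⟨_, rfl⟩
  have hd0 : 0 < d := by rw [hd]; positivity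
  -- `s` is the optimal scale for the Khintchine bound, `η` the resulting admissible window width
  obtain ⟨s, hs0, hs⟩ : ∃ s : ℝ, 0 < s ∧ s ^ 2 * d = 3 / 2 :=
    ⟨√(3 / (2 * d)), by positivity, by rw [Real.sq_sqrt (by positivity)]; field_simp⟩
  obtain ⟨η, hη⟩ : ∃ η, η = d / (4 * s) := ⟨_, rfl⟩
  have hη0 : 0 < η := by rw [hη]; positivity
  obtain ⟨C, hC⟩ : ∃ C, C = 4 * K / δ := ⟨_, rfl⟩
  have hC0 : 0 < C := by rw [hC]; positivity
  obtain ⟨M, hM⟩ : ∃ M : ℕ, M = ⌈2 * C / η⌉₊ := ⟨_, rfl⟩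
  obtain ⟨δ', hδ'⟩ : ∃ δ', δ' = δ / (2 * (M + 1)) := ⟨_, rfl⟩
  have hδ'0 : 0 < δ' := by rw [hδ']; positivity
  refine ⟨δ' ^ 2 * (d / (4 * s)), by positivity, ⌈(4 * K / (δ * q * δ')) ^ 2⌉₊ + 1, ?_⟩
  intro n hn a ha U L hU hL hdisc
  obtain ⟨r, hr⟩ : ∃ r, r = √(n : ℝ) := ⟨_, rfl⟩
  have hn1 : (1 : ℝ) ≤ n := by exact_mod_cast le_trans (by omega) hn
  have hr2 : r ^ 2 = n := by rw [hr, Real.sq_sqrt (by positivity)]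
  have hr0 : 0 < r := by rw [hr]; exact Real.sqrt_pos.2 (by linarith)
  have hrbig : 4 * K ≤ δ * q * δ' * r := by
    have h1 : (4 * K / (δ * q * δ')) ^ 2 ≤ r ^ 2 := by
      rw [hr2]
      refine (Nat.le_ceil _).trans ?_
      exact_mod_cast le_trans (by omega) hn
    have h3 := le_of_abs_le (abs_le_of_sq_le_sq h1 hr0.le)
    rw [div_le_iff₀ (by positivity)] at h3
    linarith
  rw [← hr] at hdisc ⊢
  -- most vertices of `U` have degree into `L` within `C√n` of its mean
  have hl1U : ∑ u ∈ U, |∑ x ∈ L, a u x - p * L.card| ≤ 2 * (K * (n * r)) := by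
    refine sum_abs_le_of_subset_sums _ _ _ fun U' hU' => ?_
    have := hdisc U' hU' L subset_rfl
    rw [Finset.sum_sub_distrib, Finset.sum_const, nsmul_eq_mul]
    rwa [show (U'.card : ℝ) * (p * L.card) = p * (U'.card * L.card) by ring]
  obtain ⟨g, hg⟩ : ∃ g : Fin n → ℝ, g = fun u => ∑ x ∈ L, a u x - p * L.card := ⟨_, rfl⟩
  obtain ⟨U', hU'⟩ : ∃ U', U' = U.filter fun u => |g u| ≤ C * r := ⟨_, rfl⟩
  have hU'card : δ / 2 * n ≤ U'.card := by
    have h1 : (U.filter fun u => ¬ |g u| ≤ C * r).card * (C * r) ≤ 2 * (K * (n * r)) := by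
      refine le_trans ?_ hl1U
      rw [← nsmul_eq_mul]
      refine (Finset.card_nsmul_le_sum _ (fun u => |g u|) _ fun u hu =>
        (not_le.1 (Finset.mem_filter.1 hu).2).le).trans ?_
      rw [hg]
      exact Finset.sum_le_sum_of_subset_of_nonneg (Finset.filter_subset _ _)
        fun _ _ _ => abs_nonneg _
    have h2 : ((U.filter fun u => ¬ |g u| ≤ C * r).card : ℝ) ≤ δ / 2 * n := by
      have h3 : 2 * (K * (n * r)) = (δ / 2 * n) * (C * r) := by rw [hC]; field_simp; ring
      rw [h3] at h1
      exact le_of_mul_le_mul_right h1 (by positivity)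
    have h3 := Finset.card_filter_add_card_filter_not (s := U) (fun u => |g u| ≤ C * r)
    rw [← hU'] at h3
    have h4 : (U'.card : ℝ) + (U.filter fun u => ¬ |g u| ≤ C * r).card = U.card := by
      exact_mod_cast h3
    linarith
  -- pigeonhole: a positive proportion of them lies in a single window of width `η√n`
  obtain ⟨W, hWU, hWcard, hWwin⟩ : ∃ W ⊆ U, δ' * n ≤ W.card ∧
      ∀ u ∈ W, ∀ v ∈ W, |g v - g u| ≤ η * r := by
    obtain ⟨k, hk, hkc⟩ := Finset.exists_le_card_fiber_of_nsmul_le_card_of_maps_to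
      (s := U') (t := Finset.range (M + 1)) (f := fun u => ⌊(g u + C * r) / (η * r)⌋₊)
      (b := δ' * (n : ℝ)) (by
        intro u hu
        rw [hU'] at hu
        have h1 := (abs_le.1 (Finset.mem_filter.1 hu).2).2
        rw [Finset.mem_range, Nat.lt_succ_iff, hM]
        refine (Nat.floor_le_floor ?_).trans (Nat.floor_le_ceil (2 * C / η))
        rw [div_le_div_iff₀ (by positivity) hη0]
        nlinarith [mul_pos hη0 hr0])
      ⟨0, by simp⟩ (by
        rw [Finset.card_range, nsmul_eq_mul, hδ']
        refine le_trans (le_of_eq ?_) hU'card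
        push_cast
        field_simp)
    refine ⟨_, (Finset.filter_subset _ _).trans (hU' ▸ Finset.filter_subset _ _), hkc, ?_⟩
    have hb : ∀ u ∈ U'.filter (fun u => ⌊(g u + C * r) / (η * r)⌋₊ = k),
        k * (η * r) ≤ g u + C * r ∧ g u + C * r ≤ (k + 1) * (η * r) := by
      intro u hu
      obtain ⟨hu1, hu2⟩ := Finset.mem_filter.1 hu
      rw [hU'] at hu1
      have h1 := (abs_le.1 (Finset.mem_filter.1 hu1).2).1
      have h0 : 0 ≤ (g u + C * r) / (η * r) := div_nonneg (by linarith) (by positivity)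
      rw [← hu2]
      constructor
      · rw [← le_div_iff₀ (by positivity)]; exact Nat.floor_le h0
      · rw [← div_le_iff₀ (by positivity)]; exact (Nat.lt_floor_add_one _).le
    intro u hu v hv
    have h1 := hb u hu
    have h2 := hb v hv
    rw [abs_le]
    constructor <;> linarith
  refine ⟨W, hWU, ?_⟩
  obtain ⟨m, hm⟩ : ∃ m : ℝ, m = W.card := ⟨_, rfl⟩
  obtain ⟨l, hl⟩ : ∃ l : ℝ, l = L.card := ⟨_, rfl⟩
  have hm0 : 0 ≤ m := by rw [hm]; positivity
  rw [← hm] at hWcard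
  have hl1L : ∑ x ∈ L, |∑ u ∈ W, a u x - p * m| ≤ 2 * (K * (n * r)) := by
    refine sum_abs_le_of_subset_sums _ _ _ fun L' hL' => ?_
    have := hdisc W hWU L' hL'
    rw [Finset.sum_sub_distrib, Finset.sum_const, nsmul_eq_mul, Finset.sum_comm, hm]
    rwa [show (L'.card : ℝ) * (p * W.card) = p * (W.card * L'.card) by ring]
  -- the total number of vertices of `L` distinguishing a pair in `W` is of order `n m²`
  have hD : d * n * m ^ 2 ≤ ∑ u ∈ W, ∑ v ∈ W, ∑ x ∈ L, (a v x - a u x) ^ 2 := by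
    refine le_trans ?_ (sum_pairs_dist_ge p hp0 hp1 a ha W L)
    rw [← hl, ← hm, ← hq]
    rw [← hl] at hL
    have hl0 : 0 ≤ l := by rw [hl]; positivity
    have h5 : 2 * m * ∑ x ∈ L, |∑ u ∈ W, a u x - p * m| ≤ 2 * m * (2 * (K * (n * r))) :=
      mul_le_mul_of_nonneg_left hl1L (by positivity)
    have h6 : 4 * K * (n * r) ≤ l * q * m := by
      calc 4 * K * (n * r) ≤ δ * q * δ' * r * (n * r) :=
            mul_le_mul_of_nonneg_right hrbig (by positivity)
        _ = (δ * n) * q * (δ' * n) := by rw [← hr2]; ring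
        _ ≤ l * q * m := by gcongr
    have h7 := mul_le_mul_of_nonneg_right h6 hm0
    have h8 : d * n * m ^ 2 ≤ l * q * m ^ 2 := by
      rw [hd]
      nlinarith [mul_le_mul_of_nonneg_right hL (show 0 ≤ q * m ^ 2 by positivity)]
    linarith
  rw [Finset.sum_comm, Finset.sum_congr rfl fun u _ => Finset.sum_comm]
  have hpair : ∀ u ∈ W, ∀ v ∈ W,
      2 ^ L.card * ((∑ x ∈ L, (a v x - a u x) ^ 2) / (s * r) - (3 * r / (4 * s ^ 3) + η * r))
      ≤ ∑ A ∈ L.powerset, (|∑ x ∈ L, if x ∈ A then a v x - a u x else -(a v x - a u x)|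
            - |∑ x ∈ L, (a v x - a u x)|) := by
    intro u hu v hv
    have h1 := sum_powerset_abs_signed_ge (fun x => a v x - a u x) L (s * r) (by positivity)
    rw [Finset.sum_sub_distrib, Finset.sum_const, Finset.card_powerset, nsmul_eq_mul]
    have h2 : |∑ x ∈ L, (a v x - a u x)| ≤ η * r := by
      have := hWwin u hu v hv
      rw [hg] at this
      rw [Finset.sum_sub_distrib]
      convert this using 2
      ring
    have hDn : ∑ x ∈ L, (a v x - a u x) ^ 2 ≤ n := by
      have h3 : ∑ x ∈ L, (a v x - a u x) ^ 2 ≤ ∑ x ∈ L, (1 : ℝ) :=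
        Finset.sum_le_sum fun x _ => by
          rcases ha u x with h | h <;> rcases ha v x with h' | h' <;> rw [h, h'] <;> norm_num
      refine h3.trans ?_
      rw [Finset.sum_const, nsmul_eq_mul, mul_one]
      exact_mod_cast (Finset.card_le_univ L).trans (by simp)
    have hDn0 : 0 ≤ ∑ x ∈ L, (a v x - a u x) ^ 2 := Finset.sum_nonneg fun _ _ => sq_nonneg _
    have h4 : 3 * (∑ x ∈ L, (a v x - a u x) ^ 2) ^ 2 / (4 * (s * r) ^ 3) ≤ 3 * r / (4 * s ^ 3) := by
      calc 3 * (∑ x ∈ L, (a v x - a u x) ^ 2) ^ 2 / (4 * (s * r) ^ 3)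
          ≤ 3 * (n : ℝ) ^ 2 / (4 * (s * r) ^ 3) := by gcongr
        _ = 3 * r / (4 * s ^ 3) := by rw [← hr2]; field_simp
    have h5 : (0 : ℝ) < 2 ^ L.card := by positivity
    push_cast
    refine le_trans ?_ (sub_le_sub h1 (mul_le_mul_of_nonneg_left h2 h5.le))
    rw [← mul_sub]
    refine mul_le_mul_of_nonneg_left ?_ h5.le
    linarith
  refine le_trans ?_ (Finset.sum_le_sum fun u hu => Finset.sum_le_sum fun v hv => hpair u hu v hv)
  simp only [← Finset.mul_sum, Finset.sum_sub_distrib, ← Finset.sum_div, Finset.sum_const,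
    nsmul_eq_mul]
  rw [← hm, mul_comm]
  refine mul_le_mul_of_nonneg_left ?_ (by positivity)
  have h1 : d * n * m ^ 2 / (s * r)
      ≤ (∑ u ∈ W, ∑ v ∈ W, ∑ x ∈ L, (a v x - a u x) ^ 2) / (s * r) := by gcongr
  have h2 : d * n * m ^ 2 / (s * r) = m ^ 2 * r * (4 * (d / (4 * s))) := by
    rw [← hr2]; field_simp
  have h3 : 3 * r / (4 * s ^ 3) = r * (2 * (d / (4 * s))) := by
    have : d = 3 / 2 / s ^ 2 := by rw [← hs]; field_simp
    rw [this]; field_simp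
  have h4 : (δ' * n) ^ 2 ≤ m ^ 2 := by gcongr
  have h5 := mul_le_mul_of_nonneg_right h4 (show 0 ≤ d / (4 * s) * r by positivity)
  rw [h3, hη]
  nlinarith

/-! ### From signed degree gaps to `Γ*` -/

theorem sum_symm_eq_two_mul_sum_lt {n : ℕ} (σ : Equiv.Perm (Fin n)) (W : Finset (Fin n))
    (F : Fin n → Fin n → ℝ) (hs : ∀ u v, F u v = F v u) (h0 : ∀ u, F u u = 0) :
    ∑ u ∈ W, ∑ v ∈ W, F u v = 2 * ∑ u ∈ W, ∑ v ∈ W, if σ u < σ v then F u v else 0 := by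
  have h : ∀ u v, F u v
      = (if σ u < σ v then F u v else 0) + (if σ v < σ u then F v u else 0) := by
    intro u v
    rcases lt_trichotomy (σ u) (σ v) with h | h | h
    · simp [h, h.not_gt]
    · rw [σ.injective h]; simp [h0]
    · simp [h, h.not_gt, hs u v]
  rw [Finset.sum_congr rfl fun u _ => Finset.sum_congr rfl fun v _ => h u v]
  simp only [Finset.sum_add_distrib]
  rw [Finset.sum_comm (f := fun u v => if σ v < σ u then F v u else 0)]
  ring

/-- When `A` precedes or succeeds all of `W`, the truncations `D(u)` and `U(v)` in `Γ*` are vacuous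
or exhaustive on `A`, and one of its two sums dominates the signed degree gaps inside `W`. The sign
`ε` is `1` if `A` precedes `W` and `-1` otherwise. -/
theorem gammaStarA_ge {n : ℕ} (hn : 0 < n) (adj : Fin n → Fin n → Bool) (σ : Equiv.Perm (Fin n))
    (W A : Finset (Fin n)) (ε : ℝ)
    (h : (ε = 1 ∧ ∀ x ∈ A, ∀ u ∈ W, σ x < σ u) ∨ (ε = -1 ∧ ∀ x ∈ A, ∀ u ∈ W, σ u < σ x)) :
    ∑ u ∈ W, ∑ v ∈ W, (if σ u < σ v then
      max (ε * (∑ x ∈ A, (if adj v x = true then (1 : ℝ) else 0)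
        - ∑ x ∈ A, (if adj u x = true then (1 : ℝ) else 0))) 0 else 0)
      ≤ (n : ℝ) ^ 3 * gammaStarA n adj σ A := by
  have hn' : (n : ℝ) ^ 3 ≠ 0 := by positivity
  unfold gammaStarA
  rw [← mul_assoc, mul_one_div_cancel hn', one_mul]
  have hsub : ∀ F : Fin n → Fin n → ℝ, (∀ u v, 0 ≤ F u v) →
      ∑ u ∈ W, ∑ v ∈ W, F u v ≤ ∑ u, ∑ v, F u v := by
    intro F hF
    refine (Finset.sum_le_sum fun u _ => Finset.sum_le_univ_sum_of_nonneg (hF u)).trans ?_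
    exact Finset.sum_le_univ_sum_of_nonneg fun u => Finset.sum_nonneg fun v _ => hF u v
  rcases h with ⟨rfl, h⟩ | ⟨rfl, h⟩
  · refine le_trans ?_ (le_add_of_nonneg_right (Finset.sum_nonneg fun u _ =>
      Finset.sum_nonneg fun v _ => by split_ifs <;> simp))
    refine le_trans (le_of_eq ?_) (hsub _ fun u v => by split_ifs <;> simp)
    refine Finset.sum_congr rfl fun u hu => Finset.sum_congr rfl fun v hv => ?_
    have e : ∀ w, ((A.filter fun x => adj w x = true ∧ σ x < σ u).card : ℝ)
        = ∑ x ∈ A, (if adj w x = true then (1 : ℝ) else 0) := by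
      intro w
      rw [Finset.sum_boole]
      congr 2
      exact Finset.filter_congr fun x hx => by simp [h x hx u hu]
    rw [e, e, one_mul]
  · refine le_trans ?_ (le_add_of_nonneg_left (Finset.sum_nonneg fun u _ =>
      Finset.sum_nonneg fun v _ => by split_ifs <;> simp))
    refine le_trans (le_of_eq ?_) (hsub _ fun u v => by split_ifs <;> simp)
    refine Finset.sum_congr rfl fun u hu => Finset.sum_congr rfl fun v hv => ?_
    have e : ∀ w, ((A.filter fun x => adj w x = true ∧ σ v < σ x).card : ℝ)
        = ∑ x ∈ A, (if adj w x = true then (1 : ℝ) else 0) := by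
      intro w
      rw [Finset.sum_boole]
      congr 2
      exact Finset.filter_congr fun x hx => by simp [h x hx v hv]
    rw [e, e]
    congr 2
    ring

theorem gammaStarA_le_ord (n : ℕ) (adj : Fin n → Fin n → Bool) (σ : Equiv.Perm (Fin n))
    (A : Finset (Fin n)) : gammaStarA n adj σ A ≤ gammaStarOrd n adj σ := by
  refine le_csSup (Set.Finite.bddAbove ?_) ⟨A, rfl⟩
  refine (Set.finite_range fun A => gammaStarA n adj σ A).subset ?_
  rintro _ ⟨A, rfl⟩
  exact ⟨A, rfl⟩

/-- Testing `Γ*(G, ≺)` on `A` and on `L \ A` for every `A ⊆ L`. For a pair with signed degrees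
`t, t'` into the two parts, `[t]₊ + [t']₊ ≥ (|t - t'| - |t + t'|) / 2` regardless of the order of
the pair, which makes the bound insensitive to `≺`. -/
theorem gammaStarOrd_ge {n : ℕ} (hn : 0 < n) (adj : Fin n → Fin n → Bool)
    (σ : Equiv.Perm (Fin n)) (W L : Finset (Fin n)) (a : Fin n → Fin n → ℝ)
    (ha : a = fun u x => if adj u x = true then 1 else 0)
    (h : (∀ x ∈ L, ∀ u ∈ W, σ x < σ u) ∨ (∀ x ∈ L, ∀ u ∈ W, σ u < σ x)) :
    ∑ A ∈ L.powerset, ∑ u ∈ W, ∑ v ∈ W,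
          (|∑ x ∈ L, if x ∈ A then a v x - a u x else -(a v x - a u x)|
            - |∑ x ∈ L, (a v x - a u x)|)
      ≤ 8 * 2 ^ L.card * ((n : ℝ) ^ 3 * gammaStarOrd n adj σ) := by
  obtain ⟨ε, hε1, hε⟩ : ∃ ε : ℝ, |ε| = 1 ∧ ∀ A ⊆ L,
      (ε = 1 ∧ ∀ x ∈ A, ∀ u ∈ W, σ x < σ u) ∨ (ε = -1 ∧ ∀ x ∈ A, ∀ u ∈ W, σ u < σ x) := by
    rcases h with h | h
    · exact ⟨1, by simp, fun A hA => Or.inl ⟨rfl, fun x hx => h x (hA hx)⟩⟩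
    · exact ⟨-1, by simp, fun A hA => Or.inr ⟨rfl, fun x hx => h x (hA hx)⟩⟩
  have hn3 : (0 : ℝ) ≤ (n : ℝ) ^ 3 := by positivity
  have hA : ∀ A ∈ L.powerset, ∑ u ∈ W, ∑ v ∈ W,
          (|∑ x ∈ L, if x ∈ A then a v x - a u x else -(a v x - a u x)|
            - |∑ x ∈ L, (a v x - a u x)|) ≤ 8 * ((n : ℝ) ^ 3 * gammaStarOrd n adj σ) := by
    intro A hAL
    have hAL := Finset.mem_powerset.1 hAL
    rw [sum_symm_eq_two_mul_sum_lt σ W]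
    · have h1 := (gammaStarA_ge hn adj σ W A ε (hε A hAL)).trans
        (mul_le_mul_of_nonneg_left (gammaStarA_le_ord n adj σ A) hn3)
      have h2 := (gammaStarA_ge hn adj σ W (L \ A) ε (hε _ Finset.sdiff_subset)).trans
        (mul_le_mul_of_nonneg_left (gammaStarA_le_ord n adj σ (L \ A)) hn3)
      have h3 := add_le_add h1 h2
      simp only [← Finset.sum_add_distrib] at h3
      suffices hs : ∑ u ∈ W, ∑ v ∈ W, (if σ u < σ v then
          (|∑ x ∈ L, if x ∈ A then a v x - a u x else -(a v x - a u x)|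
            - |∑ x ∈ L, (a v x - a u x)|) else 0)
          ≤ 2 * (n ^ 3 * gammaStarOrd n adj σ + n ^ 3 * gammaStarOrd n adj σ) by linarith
      refine le_trans ?_ (mul_le_mul_of_nonneg_left h3 (by norm_num))
      simp only [Finset.mul_sum]
      refine Finset.sum_le_sum fun u _ => Finset.sum_le_sum fun v _ => ?_
      split_ifs with huv
      · have ea : ∀ w x, (if adj w x = true then (1 : ℝ) else 0) = a w x := by
          intro w x; rw [ha]
        simp only [ea]
        rw [← Finset.sum_sub_distrib, ← Finset.sum_sub_distrib]
        have e1 : ∑ x ∈ L, (a v x - a u x)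
            = ∑ x ∈ A, (a v x - a u x) + ∑ x ∈ L \ A, (a v x - a u x) := by
          rw [add_comm, Finset.sum_sdiff hAL]
        have e2 : (∑ x ∈ L, if x ∈ A then a v x - a u x else -(a v x - a u x))
            = ∑ x ∈ A, (a v x - a u x) - ∑ x ∈ L \ A, (a v x - a u x) := by
          rw [← Finset.sum_sdiff hAL, add_comm, sub_eq_add_neg, ← Finset.sum_neg_distrib]
          congr 1
          · exact Finset.sum_congr rfl fun x hx => if_pos hx
          · exact Finset.sum_congr rfl fun x hx => if_neg (Finset.mem_sdiff.1 hx).2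
        rw [e1, e2]
        generalize ∑ x ∈ A, (a v x - a u x) = t
        generalize ∑ x ∈ L \ A, (a v x - a u x) = t'
        have k1 : |t - t'| = |ε * t - ε * t'| := by rw [← mul_sub, abs_mul, hε1, one_mul]
        have k2 : |t + t'| = |ε * t + ε * t'| := by rw [← mul_add, abs_mul, hε1, one_mul]
        rw [k1, k2]
        generalize ε * t = s
        generalize ε * t' = s'
        have m1 := le_max_left s 0
        have m2 := le_max_right s 0
        have m3 := le_max_left s' 0
        have m4 := le_max_right s' 0
        have m5 := neg_abs_le (s + s')
        rcases abs_cases (s - s') with ⟨h, _⟩ | ⟨h, _⟩ <;> rw [h] <;>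
          rcases abs_cases (s + s') with ⟨h', _⟩ | ⟨h', _⟩ <;> rw [h'] <;> linarith
      · simp
    · intro u v
      rw [← abs_neg (∑ x ∈ L, (a v x - a u x)),
        ← abs_neg (∑ x ∈ L, if x ∈ A then a v x - a u x else -(a v x - a u x)),
        ← Finset.sum_neg_distrib, ← Finset.sum_neg_distrib]
      congr 2
      · refine Finset.sum_congr rfl fun x _ => ?_
        split_ifs <;> ring
      · exact Finset.sum_congr rfl fun x _ => by ring
    · intro u
      simp
  refine (Finset.sum_le_sum hA).trans (le_of_eq ?_)
  rw [Finset.sum_const, Finset.card_powerset, nsmul_eq_mul]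
  push_cast
  ring

/-- Cutting `S` at its median and keeping the larger side of `T` yields large subsets of `S` and
`T`, one of which entirely precedes the other. -/
theorem exists_separated {n : ℕ} (σ : Equiv.Perm (Fin n)) (S T : Finset (Fin n)) (k : ℕ)
    (hS : 2 * k ≤ S.card) (hT : 2 * k ≤ T.card) :
    ∃ U ⊆ S, ∃ L ⊆ T, k ≤ U.card ∧ k ≤ L.card ∧
      ((∀ x ∈ L, ∀ u ∈ U, σ x < σ u) ∨ (∀ x ∈ L, ∀ u ∈ U, σ u < σ x)) := by
  obtain ⟨t, ht⟩ : ∃ t : ℕ, (S.filter fun x => (σ x : ℕ) < t).card = k := by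
    have hex : ∃ t : ℕ, k ≤ (S.filter fun x => (σ x : ℕ) < t).card :=
      ⟨n, by rw [Finset.filter_true_of_mem fun x _ => (σ x).2]; omega⟩
    classical
    refine ⟨Nat.find hex, le_antisymm ?_ (Nat.find_spec hex)⟩
    rcases h : Nat.find hex with _ | t
    · simp
    · have h1 : ¬ k ≤ (S.filter fun x => (σ x : ℕ) < t).card := Nat.find_min hex (by omega)
      have h2 : (S.filter fun x => (σ x : ℕ) < t + 1).card
          ≤ (S.filter fun x => (σ x : ℕ) < t).card + (S.filter fun x => (σ x : ℕ) = t).card := by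
        rw [← Finset.card_union_of_disjoint]
        · refine Finset.card_le_card fun x hx => ?_
          simp only [Finset.mem_filter, Finset.mem_union] at hx ⊢
          have := hx.1
          have := hx.2
          by_cases h : (σ x : ℕ) = t
          · exact Or.inr ⟨hx.1, h⟩
          · exact Or.inl ⟨hx.1, by omega⟩
        · rw [Finset.disjoint_filter]
          intro x _ h1 h2
          omega
      have h3 : (S.filter fun x => (σ x : ℕ) = t).card ≤ 1 := by
        rw [Finset.card_le_one]
        intro x hx y hy
        apply σ.injective
        apply Fin.ext
        rw [(Finset.mem_filter.1 hx).2, (Finset.mem_filter.1 hy).2]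
      omega
  have hS2 := Finset.card_filter_add_card_filter_not (s := S) (fun x => (σ x : ℕ) < t)
  have hT2 := Finset.card_filter_add_card_filter_not (s := T) (fun x => (σ x : ℕ) < t)
  by_cases hc : k ≤ (T.filter fun x => (σ x : ℕ) < t).card
  · refine ⟨S.filter fun x => ¬ (σ x : ℕ) < t, Finset.filter_subset _ _,
      T.filter fun x => (σ x : ℕ) < t, Finset.filter_subset _ _, by omega, hc, Or.inl ?_⟩
    intro x hx u hu
    have h1 := (Finset.mem_filter.1 hx).2
    have h2 := (Finset.mem_filter.1 hu).2
    rw [Fin.lt_def]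
    omega
  · refine ⟨S.filter fun x => (σ x : ℕ) < t, Finset.filter_subset _ _,
      T.filter fun x => ¬ (σ x : ℕ) < t, Finset.filter_subset _ _, by omega, by omega, Or.inr ?_⟩
    intro x hx u hu
    have h1 := (Finset.mem_filter.1 hx).2
    have h2 := (Finset.mem_filter.1 hu).2
    rw [Fin.lt_def]
    omega

/-- Deterministic part of the theorem: low discrepancy between all disjoint subsets of two
linear-size vertex sets `S` and `T` forces `Γ*` to be of order at least `n^{-1/2}`. -/
theorem exists_gammaStar_ge (p δ K : ℝ) (hp0 : 0 < p) (hp1 : p < 1) (hδ : 0 < δ)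
    (hK : 0 < K) :
    ∃ c : ℝ, 0 < c ∧ ∃ N₀ : ℕ, ∀ n : ℕ, N₀ ≤ n → ∀ adj : Fin n → Fin n → Bool,
      ∀ S T : Finset (Fin n), δ * n ≤ S.card → δ * n ≤ T.card →
      (∀ U ⊆ S, ∀ L ⊆ T, Disjoint U L →
        |∑ u ∈ U, ∑ x ∈ L, (if adj u x = true then (1 : ℝ) else 0) - p * (U.card * L.card)|
          ≤ K * (n * √n)) →
      c * (n : ℝ) ^ (-(1:ℝ)/2) ≤ gammaStar n adj := by
  obtain ⟨c, hc, N, hN⟩ := exists_window_signed_gap p (δ / 4) K hp0 hp1 (by positivity) hK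
  refine ⟨c / 8, by positivity, N + ⌈4 / δ⌉₊ + 1, ?_⟩
  intro n hn adj S T hS hT hdisc
  have hn0 : 0 < n := by omega
  have hn0' : (0 : ℝ) < n := by exact_mod_cast hn0
  have hnδ : 4 ≤ δ * n := by
    have h1 : 4 / δ ≤ n := (Nat.le_ceil _).trans (by exact_mod_cast (by omega))
    rw [div_le_iff₀ hδ] at h1
    linarith
  refine le_csInf ⟨_, Equiv.refl _, rfl⟩ ?_
  rintro _ ⟨σ, rfl⟩
  obtain ⟨k, hk⟩ : ∃ k, k = ⌊δ * n / 2⌋₊ := ⟨_, rfl⟩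
  have hk1 : (k : ℝ) ≤ δ * n / 2 := by rw [hk]; exact Nat.floor_le (by positivity)
  have hk2 : δ / 4 * n ≤ k := by
    have := Nat.lt_floor_add_one (δ * n / 2)
    rw [← hk] at this
    linarith
  have hSk : 2 * k ≤ S.card := by
    have : ((2 * k : ℕ) : ℝ) ≤ S.card := by push_cast; linarith
    exact_mod_cast this
  have hTk : 2 * k ≤ T.card := by
    have : ((2 * k : ℕ) : ℝ) ≤ T.card := by push_cast; linarith
    exact_mod_cast this
  obtain ⟨U, hUS, L, hLT, hU, hL, hUL⟩ := exists_separated σ S T k hSk hTk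
  have hdisj : Disjoint U L := by
    rw [Finset.disjoint_left]
    intro x hxU hxL
    rcases hUL with h | h <;> exact lt_irrefl _ (h x hxL x hxU)
  obtain ⟨a, ha⟩ : ∃ a : Fin n → Fin n → ℝ,
    a = fun u x => if adj u x = true then 1 else 0 := ⟨_, rfl⟩
  obtain ⟨W, hWU, hW⟩ := hN n (by omega) a
    (fun u x => by rw [ha]; by_cases h : adj u x = true <;> simp [h]) U L
    (hk2.trans (by exact_mod_cast hU)) (hk2.trans (by exact_mod_cast hL))
    (fun U' hU' L' hL' => by
      rw [ha]
      exact hdisc U' (hU'.trans hUS) L' (hL'.trans hLT) (hdisj.mono hU' hL'))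
  have h1 := hW.trans (gammaStarOrd_ge hn0 adj σ W L a ha (by
    rcases hUL with h | h
    · exact Or.inl fun x hx u hu => h x hx u (hWU hu)
    · exact Or.inr fun x hx u hu => h x hx u (hWU hu)))
  have h2 : c * ((n : ℝ) ^ 2 * √n) ≤ 8 * ((n : ℝ) ^ 3 * gammaStarOrd n adj σ) := by
    have : (0 : ℝ) < 2 ^ L.card := by positivity
    refine le_of_mul_le_mul_right (h1.trans (le_of_eq ?_)) this
    ring
  have h3 : (n : ℝ) ^ (-(1:ℝ)/2) * n ^ 3 = n ^ 2 * √n := by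
    have h4 : (n : ℝ) ^ (-(1:ℝ)/2) = (√n)⁻¹ := by
      rw [Real.sqrt_eq_rpow, ← Real.rpow_neg hn0'.le]; norm_num
    have h5 : √(n : ℝ) ^ 2 = n := Real.sq_sqrt hn0'.le
    have h6 : 0 < √(n : ℝ) := Real.sqrt_pos.2 hn0'
    rw [h4, inv_mul_eq_div, div_eq_iff h6.ne']
    calc (n : ℝ) ^ 3 = n ^ 2 * n := by ring
      _ = n ^ 2 * (√n) ^ 2 := by rw [h5]
      _ = _ := by ring
  have h4 : (0 : ℝ) < n ^ 3 := by positivity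
  refine le_of_mul_le_mul_right ?_ h4
  rw [mul_assoc, h3]
  linarith

/-! ### Concentration in the random graph -/

open ProbabilityTheory in
/-- Hoeffding's inequality for independent variables of common mean `m` valued in an interval of
length one, stated with any upper bound `M` for the number of summands. -/
theorem hoeffding_unit {Ω ι : Type*} [MeasurableSpace Ω] (μ : Measure Ω) [IsProbabilityMeasure μ]
    (X : ι → Ω → ℝ) (hind : iIndepFun X μ) (hm : ∀ i, Measurable (X i)) (a m : ℝ)
    (hX : ∀ i ω, X i ω ∈ Icc a (a + 1)) (hE : ∀ i, ∫ ω, X i ω ∂μ = m) (t : Finset ι)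
    (M ε : ℝ) (ht : (t.card : ℝ) ≤ M) (hε : 0 < ε) :
    μ {ω | ε ≤ ∑ i ∈ t, (X i ω - m)} ≤ ENNReal.ofReal (Real.exp (-2 * ε ^ 2 / M)) := by
  rcases t.eq_empty_or_nonempty with rfl | hne
  · have : {ω : Ω | ε ≤ ∑ i ∈ (∅ : Finset ι), (X i ω - m)} = ∅ := by
      ext ω; simp [hε]
    rw [this]; simp
  have hsub : ∀ i ∈ t, HasSubgaussianMGF (fun ω => X i ω - m) ((‖(a + 1) - a‖₊ / 2) ^ 2) μ := by
    intro i _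
    have := hasSubgaussianMGF_of_mem_Icc (μ := μ) (hm i).aemeasurable
      (Filter.Eventually.of_forall (hX i))
    rwa [hE i] at this
  have hind' : iIndepFun (fun i ω => X i ω - m) μ :=
    hind.comp (fun _ y => y - m) fun _ => measurable_id.sub_const m
  have h := HasSubgaussianMGF.measure_sum_ge_le_of_iIndepFun hind' hsub hε.le
  have hc : (0 : ℝ) < t.card := by exact_mod_cast hne.card_pos
  rw [← ofReal_measureReal]
  refine ENNReal.ofReal_le_ofReal (h.trans (Real.exp_le_exp.2 ?_))
  have e : (2 * ((∑ _i ∈ t, (‖(a + 1) - a‖₊ / 2) ^ 2 : NNReal) : ℝ)) = t.card / 2 := by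
    rw [Finset.sum_const, nsmul_eq_mul]
    push_cast
    rw [add_sub_cancel_left]
    norm_num
    ring
  rw [e, neg_mul, neg_div, neg_div, neg_le_neg_iff]
  calc 2 * ε ^ 2 / M ≤ 2 * ε ^ 2 / t.card := by gcongr
    _ = ε ^ 2 / (t.card / 2) := by field_simp

instance : IsProbabilityMeasure unif01 := ⟨by simp [unif01]⟩

instance (n : ℕ) : IsProbabilityMeasure (graphSampleMeasure n) := by
  unfold graphSampleMeasure; infer_instance

open Classical ProbabilityTheory in
/-- Few labels landing in a set of measure at least `s` is exponentially unlikely. -/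
theorem measure_few_labels_le (s : ℝ) (hs : 0 < s) (S : Set ℝ) (hS : MeasurableSet S)
    (hS1 : S ⊆ Icc 0 1) (hsS : s ≤ (volume S).toReal) (n : ℕ) (hn : 0 < n) :
    graphSampleMeasure n {ω | ((Finset.univ.filter fun i => ω.1 i ∈ S).card : ℝ) < s / 2 * n}
      ≤ ENNReal.ofReal (Real.exp (-(s ^ 2 / 2 * n))) := by
  have hn' : (0 : ℝ) < n := by exact_mod_cast hn
  obtain ⟨P, hP⟩ : ∃ P, P = Measure.pi fun _ : Fin n => unif01 := ⟨_, rfl⟩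
  have hPp : IsProbabilityMeasure P := by rw [hP]; infer_instance
  have hmap : (graphSampleMeasure n).map Prod.fst = P := by
    rw [hP]; exact measurePreserving_fst.map_eq
  refine (Measure.le_map_apply measurable_fst.aemeasurable
    {x : Fin n → ℝ | ((Finset.univ.filter fun i => x i ∈ S).card : ℝ) < s / 2 * n}).trans ?_
  rw [hmap]
  have hmeas : Measurable (S.indicator fun _ : ℝ => (-1 : ℝ)) := measurable_const.indicator hS
  have hE : ∀ i : Fin n, ∫ x, S.indicator (fun _ => (-1 : ℝ)) (x i) ∂P = -(volume S).toReal := by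
    intro i
    have h1 : P.map (fun x => x i) = unif01 := by
      rw [hP]; exact (measurePreserving_eval (fun _ : Fin n => unif01) i).map_eq
    have h2 := integral_map (μ := P) (φ := fun x : Fin n → ℝ => x i)
      (measurable_pi_apply i).aemeasurable (f := S.indicator fun _ => (-1 : ℝ))
      hmeas.aestronglyMeasurable
    rw [h1] at h2
    rw [← h2, integral_indicator hS]
    simp [unif01, Measure.real, Measure.restrict_apply hS, inter_eq_left.2 hS1]
  have h := hoeffding_unit P (fun (i : Fin n) x => S.indicator (fun _ => (-1 : ℝ)) (x i))
    (by rw [hP]; exact iIndepFun_pi (X := fun _ : Fin n => S.indicator fun _ : ℝ => (-1 : ℝ))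
          fun _ => hmeas.aemeasurable)
    (fun i => hmeas.comp (measurable_pi_apply i)) (-1) (-(volume S).toReal)
    (fun i x => by
      by_cases h : x i ∈ S <;> simp [h]) hE Finset.univ n (s / 2 * n) (by simp) (by positivity)
  refine (measure_mono ?_).trans (h.trans (le_of_eq ?_))
  · intro x hx
    simp only [Set.mem_ofPred_eq] at hx ⊢
    have e : ∑ i : Fin n, S.indicator (fun _ => (-1 : ℝ)) (x i)
        = -((Finset.univ.filter fun i => x i ∈ S).card : ℝ) := by
      rw [← Finset.sum_boole, ← Finset.sum_neg_distrib]
      refine Finset.sum_congr rfl fun i _ => ?_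
      by_cases h : x i ∈ S <;> simp [h]
    rw [Finset.sum_sub_distrib, e]
    simp only [Finset.sum_const, Finset.card_univ, Fintype.card_fin, nsmul_eq_mul]
    nlinarith
  · congr 2
    field_simp

/-- The number of pairs in `U × L` whose coin is at most `p`. -/
noncomputable def coinEdges (n : ℕ) (p : ℝ) (ω : Fin n → Fin n → ℝ) (U L : Finset (Fin n)) : ℝ :=
  ∑ u ∈ U, ∑ x ∈ L, (Iic p).indicator (fun _ => (1 : ℝ)) (ω (min u x) (max u x))

open ProbabilityTheory in
/-- For disjoint `U` and `L` the coins involved are distinct, so that Hoeffding's inequality applies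
with at most `n²` summands. A deviation of `2n^{3/2}` is tuned to survive a union bound over all
`4ⁿ` pairs `(U, L)`. -/
theorem measure_coinEdges_dev_le (p : ℝ) (hp0 : 0 < p) (hp1 : p < 1) (n : ℕ) (hn : 0 < n)
    (U L : Finset (Fin n)) (hd : Disjoint U L) :
    graphSampleMeasure n {ω | 2 * (n * √n) < |coinEdges n p ω.2 U L - p * (U.card * L.card)|}
      ≤ ENNReal.ofReal (2 * Real.exp (-(8 * n))) := by
  have hn' : (0 : ℝ) < n := by exact_mod_cast hn
  obtain ⟨P, hP⟩ : ∃ P, P = Measure.pi fun _ : Fin n => Measure.pi fun _ : Fin n => unif01 :=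
    ⟨_, rfl⟩
  have hPp : IsProbabilityMeasure P := by rw [hP]; infer_instance
  have hmap : (graphSampleMeasure n).map Prod.snd = P := by
    rw [hP]; exact measurePreserving_snd.map_eq
  refine (Measure.le_map_apply measurable_snd.aemeasurable
    {x | 2 * (n * √n) < |coinEdges n p x U L - p * (U.card * L.card)|}).trans ?_
  rw [hmap]
  -- both tails are handled at once by a coefficient `k = ± 1`
  have key : ∀ k : ℝ, (k = 1 ∨ k = -1) →
      P {x | 2 * (n * √n) ≤ k * (coinEdges n p x U L - p * (U.card * L.card))}
        ≤ ENNReal.ofReal (Real.exp (-(8 * n))) := by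
    intro k hk
    have hmeas : Measurable ((Iic p).indicator fun _ : ℝ => k) :=
      measurable_const.indicator measurableSet_Iic
    obtain ⟨X, hX⟩ : ∃ X : Fin n × Fin n → (Fin n → Fin n → ℝ) → ℝ,
      X = fun e ω => (Iic p).indicator (fun _ => k) (ω e.1 e.2) := ⟨_, rfl⟩
    have hXm : ∀ e, Measurable (X e) := by
      intro e
      rw [hX]
      exact hmeas.comp ((measurable_pi_apply e.2).comp (measurable_pi_apply e.1))
    have hind : iIndepFun X P := by
      have := iIndepFun_uncurry_infinitePi' (fun (_ : Fin n) (_ : Fin n) => unif01)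
        (X := fun _ _ => (Iic p).indicator fun _ : ℝ => k) (fun _ _ => hmeas)
      simp only [Measure.infinitePi_eq_pi] at this
      rw [hX, hP]
      exact this
    have hE : ∀ e, ∫ ω, X e ω ∂P = k * p := by
      intro e
      have h1 : P.map (fun ω => ω e.1 e.2) = unif01 := by
        rw [hP]
        exact ((measurePreserving_eval (fun _ : Fin n => unif01) e.2).comp
          (measurePreserving_eval (fun _ : Fin n => Measure.pi fun _ : Fin n => unif01) e.1)).map_eq
      have h2 := integral_map (μ := P) (φ := fun ω : Fin n → Fin n → ℝ => ω e.1 e.2)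
        ((measurable_pi_apply e.2).comp (measurable_pi_apply e.1)).aemeasurable
        (f := (Iic p).indicator fun _ => k) hmeas.aestronglyMeasurable
      rw [h1] at h2
      rw [hX, ← h2, integral_indicator measurableSet_Iic]
      have h3 : Iic p ∩ Icc 0 1 = Icc 0 p := by
        ext y; simp only [mem_inter_iff, mem_Iic, mem_Icc]
        constructor
        · rintro ⟨a, b, c⟩; exact ⟨b, a⟩
        · rintro ⟨a, b⟩; exact ⟨b, a, by linarith⟩
      simp [unif01, Measure.real, h3, hp0.le, mul_comm]
    obtain ⟨t, ht⟩ : ∃ t : Finset (Fin n × Fin n),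
      t = (U ×ˢ L).image fun q => (min q.1 q.2, max q.1 q.2) := ⟨_, rfl⟩
    have hinj : Set.InjOn (fun q : Fin n × Fin n => (min q.1 q.2, max q.1 q.2))
        (U ×ˢ L : Finset (Fin n × Fin n)) := by
      rintro ⟨u, x⟩ h1 ⟨u', x'⟩ h2 h
      obtain ⟨hu, hx⟩ := Finset.mem_product.1 (Finset.mem_coe.1 h1)
      obtain ⟨hu', hx'⟩ := Finset.mem_product.1 (Finset.mem_coe.1 h2)
      have n1 : u ≠ x' := fun e => Finset.disjoint_left.1 hd hu (e ▸ hx')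
      simp only [Prod.mk.injEq] at h ⊢
      dsimp only at hu hx hu' hx'
      simp only [Fin.ext_iff, ne_eq, Fin.coe_min, Fin.coe_max] at h n1 ⊢
      omega
    have htc : t.card = U.card * L.card := by
      rw [ht, Finset.card_image_of_injOn hinj, Finset.card_product]
    have hsum : ∀ ω, ∑ e ∈ t, (X e ω - k * p)
        = k * (coinEdges n p ω U L - p * (U.card * L.card)) := by
      intro ω
      rw [Finset.sum_sub_distrib, Finset.sum_const, htc, ht, Finset.sum_image hinj,
        Finset.sum_product, mul_sub, coinEdges, Finset.mul_sum, nsmul_eq_mul]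
      push_cast
      congr 1
      · refine Finset.sum_congr rfl fun u _ => ?_
        rw [Finset.mul_sum]
        refine Finset.sum_congr rfl fun x _ => ?_
        rw [hX]
        simp [Set.indicator_apply]
      · ring
    have hcard : (t.card : ℝ) ≤ (n : ℝ) ^ 2 := by
      rw [htc, sq]
      push_cast
      gcongr
      · exact_mod_cast (Finset.card_le_univ U).trans (by simp)
      · exact_mod_cast (Finset.card_le_univ L).trans (by simp)
    have h := hoeffding_unit P X hind hXm (min k 0) (k * p)
      (fun e ω => by
        rw [hX]
        rcases hk with rfl | rfl <;> simp only [Set.indicator_apply] <;> split_ifs <;> norm_num)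
      hE t ((n : ℝ) ^ 2) (2 * (n * √n)) hcard (by positivity)
    simp only [hsum] at h
    refine h.trans (le_of_eq ?_)
    congr 2
    rw [mul_pow, mul_pow, Real.sq_sqrt hn'.le]
    field_simp
    norm_num
  have hsub : {x | 2 * (n * √n) < |coinEdges n p x U L - p * (U.card * L.card)|}
      ⊆ {x | 2 * (n * √n) ≤ 1 * (coinEdges n p x U L - p * (U.card * L.card))}
        ∪ {x | 2 * (n * √n) ≤ -1 * (coinEdges n p x U L - p * (U.card * L.card))} := by
    intro x hx
    simp only [Set.mem_ofPred_eq, mem_union] at hx ⊢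
    rcases lt_abs.1 hx with h | h
    · left; linarith
    · right; linarith
  refine (measure_mono hsub).trans ((measure_union_le _ _).trans
    ((add_le_add (key 1 (Or.inl rfl)) (key (-1) (Or.inr rfl))).trans (le_of_eq ?_)))
  rw [← ENNReal.ofReal_add (by positivity) (by positivity)]
  congr 1
  ring

/-- Almost surely `w` equals `p` at every pair of labels of distinct vertices lying in `S × T`. -/
theorem ae_labels_flat (w : ℝ → ℝ → ℝ) (p : ℝ) (S T : Set ℝ) (hS : MeasurableSet S)
    (hT : MeasurableSet T)
    (hw : ∀ᵐ q : ℝ × ℝ ∂(volume.restrict (S ×ˢ T)), w q.1 q.2 = p) (n : ℕ) :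
    ∀ᵐ ω ∂(graphSampleMeasure n), ∀ i j, i ≠ j → ω.1 i ∈ S → ω.1 j ∈ T →
      w (ω.1 i) (ω.1 j) = p := by
  rw [ae_restrict_iff' (hS.prod hT)] at hw
  have h1 : ∀ᵐ x ∂(Measure.pi fun _ : Fin n => unif01), ∀ i j, i ≠ j → x i ∈ S → x j ∈ T →
      w (x i) (x j) = p := by
    rw [ae_all_iff]
    intro i
    rw [ae_all_iff]
    intro j
    by_cases hij : i = j
    · exact Filter.Eventually.of_forall fun x h => absurd hij h
    have hmap : (Measure.pi fun _ : Fin n => unif01).map (fun x => (x i, x j))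
        = unif01.prod unif01 := by
      have hind := (ProbabilityTheory.iIndepFun_pi (μ := fun _ : Fin n => unif01)
        (X := fun _ => id) fun _ => aemeasurable_id).indepFun hij
      have := hind.map_prod_eq_prod_map_map (measurable_pi_apply i).aemeasurable
        (measurable_pi_apply j).aemeasurable
      rw [this, (measurePreserving_eval (fun _ : Fin n => unif01) i).map_eq,
        (measurePreserving_eval (fun _ : Fin n => unif01) j).map_eq]
    have hac : (Measure.pi fun _ : Fin n => unif01).map (fun x => (x i, x j))
        ≪ (volume : Measure (ℝ × ℝ)) := by
      rw [hmap, unif01, Measure.prod_restrict]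
      exact Measure.restrict_le_self.absolutelyContinuous
    have h2 := ae_of_ae_map ((measurable_pi_apply i).prodMk (measurable_pi_apply j)).aemeasurable
      (hac.ae_le hw)
    filter_upwards [h2] with x hx _ hi hj
    exact hx ⟨hi, hj⟩
  exact (measurePreserving_fst (μ := Measure.pi fun _ : Fin n => unif01)
    (ν := Measure.pi fun _ : Fin n => Measure.pi fun _ : Fin n => unif01)).quasiMeasurePreserving.ae h1

/-! ### The random graph has large `Γ*` -/

open Classical in
/-- Outside an event of exponentially small probability, linearly many vertices are labelled in `S`
and in `T`, and the number of edges between any two disjoint sets of such vertices is within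
`2n^{3/2}` of what density `p` predicts. -/
theorem measure_bad_le (p : ℝ) (hp0 : 0 < p) (hp1 : p < 1) (s : ℝ) (hs : 0 < s)
    (w : ℝ → ℝ → ℝ) (hsymm : ∀ x y, w x y = w y x) (S T : Set ℝ) (hS : MeasurableSet S)
    (hT : MeasurableSet T) (hS1 : S ⊆ Icc 0 1) (hT1 : T ⊆ Icc 0 1)
    (hsS : s ≤ (volume S).toReal) (hsT : s ≤ (volume T).toReal)
    (hw : ∀ᵐ q : ℝ × ℝ ∂(volume.restrict (S ×ˢ T)), w q.1 q.2 = p) (n : ℕ) (hn : 0 < n) :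
    graphSampleMeasure n {ω | ¬ ∃ S' T' : Finset (Fin n),
        s / 2 * n ≤ S'.card ∧ s / 2 * n ≤ T'.card ∧ ∀ U ⊆ S', ∀ L ⊆ T', Disjoint U L →
        |∑ u ∈ U, ∑ x ∈ L, (if sampleAdj w n ω u x = true then (1 : ℝ) else 0)
          - p * (U.card * L.card)| ≤ 2 * (n * √n)}
      ≤ ENNReal.ofReal (2 * Real.exp (-(s ^ 2 / 2 * n)) + 4 ^ n * (2 * Real.exp (-(8 * n)))) := by
  obtain ⟨B1, hB1⟩ : ∃ B : Set ((Fin n → ℝ) × (Fin n → Fin n → ℝ)),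
    B = {ω | ((Finset.univ.filter fun i => ω.1 i ∈ S).card : ℝ) < s / 2 * n} := ⟨_, rfl⟩
  obtain ⟨B2, hB2⟩ : ∃ B : Set ((Fin n → ℝ) × (Fin n → Fin n → ℝ)),
    B = {ω | ((Finset.univ.filter fun i => ω.1 i ∈ T).card : ℝ) < s / 2 * n} := ⟨_, rfl⟩
  obtain ⟨B3, hB3⟩ : ∃ B : Set ((Fin n → ℝ) × (Fin n → Fin n → ℝ)),
    B = {ω | ¬ ∀ i j, i ≠ j → ω.1 i ∈ S → ω.1 j ∈ T → w (ω.1 i) (ω.1 j) = p} := ⟨_, rfl⟩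
  obtain ⟨D, hD⟩ : ∃ D : Finset (Finset (Fin n) × Finset (Fin n)),
    D = Finset.univ.filter fun q => Disjoint q.1 q.2 := ⟨_, rfl⟩
  obtain ⟨B4, hB4⟩ : ∃ B : Finset (Fin n) × Finset (Fin n) →
      Set ((Fin n → ℝ) × (Fin n → Fin n → ℝ)),
    B = fun q => {ω | 2 * (n * √n) < |coinEdges n p ω.2 q.1 q.2 - p * (q.1.card * q.2.card)|} :=
    ⟨_, rfl⟩
  have h1 : graphSampleMeasure n B1 ≤ ENNReal.ofReal (Real.exp (-(s ^ 2 / 2 * n))) := by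
    rw [hB1]; exact measure_few_labels_le s hs S hS hS1 hsS n hn
  have h2 : graphSampleMeasure n B2 ≤ ENNReal.ofReal (Real.exp (-(s ^ 2 / 2 * n))) := by
    rw [hB2]; exact measure_few_labels_le s hs T hT hT1 hsT n hn
  have h3 : graphSampleMeasure n B3 = 0 := by
    rw [hB3]; exact ae_iff.1 (ae_labels_flat w p S T hS hT hw n)
  have h4 : graphSampleMeasure n (⋃ q ∈ D, B4 q)
      ≤ ENNReal.ofReal (4 ^ n * (2 * Real.exp (-(8 * n)))) := by
    have hb : ∀ q ∈ D, graphSampleMeasure n (B4 q)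
        ≤ ENNReal.ofReal (2 * Real.exp (-(8 * n))) := by
      intro q hq
      rw [hD, Finset.mem_filter] at hq
      rw [hB4]
      exact measure_coinEdges_dev_le p hp0 hp1 n hn q.1 q.2 hq.2
    have hDc : D.card ≤ 4 ^ n := by
      refine (Finset.card_le_univ D).trans (le_of_eq ?_)
      rw [Fintype.card_prod, Fintype.card_finset, Fintype.card_fin, ← mul_pow]
      norm_num
    refine (measure_biUnion_finset_le D B4).trans ((Finset.sum_le_sum hb).trans ?_)
    rw [Finset.sum_const, ← ENNReal.ofReal_nsmul, nsmul_eq_mul]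
    refine ENNReal.ofReal_le_ofReal (mul_le_mul_of_nonneg_right ?_ (by positivity))
    exact_mod_cast hDc
  have hsub : {ω | ¬ ∃ S' T' : Finset (Fin n),
        s / 2 * n ≤ S'.card ∧ s / 2 * n ≤ T'.card ∧ ∀ U ⊆ S', ∀ L ⊆ T', Disjoint U L →
        |∑ u ∈ U, ∑ x ∈ L, (if sampleAdj w n ω u x = true then (1 : ℝ) else 0)
          - p * (U.card * L.card)| ≤ 2 * (n * √n)}
      ⊆ ((B1 ∪ B2) ∪ B3) ∪ ⋃ q ∈ D, B4 q := by
    intro ω hω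
    rw [Set.mem_ofPred_eq] at hω
    by_contra hB
    simp only [mem_union, not_or, mem_iUnion, not_exists] at hB
    obtain ⟨⟨⟨b1, b2⟩, b3⟩, b4⟩ := hB
    rw [hB1, Set.mem_ofPred_eq, not_lt] at b1
    rw [hB2, Set.mem_ofPred_eq, not_lt] at b2
    rw [hB3, Set.mem_ofPred_eq, not_not] at b3
    refine hω ⟨_, _, b1, b2, fun U hU L hL hd => ?_⟩
    have b5 := b4 (U, L) (by rw [hD]; simpa using hd)
    rw [hB4] at b5
    simp only [Set.mem_ofPred_eq, not_lt] at b5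
    suffices he : ∑ u ∈ U, ∑ x ∈ L, (if sampleAdj w n ω u x = true then (1 : ℝ) else 0)
        = coinEdges n p ω.2 U L by rwa [he]
    refine Finset.sum_congr rfl fun u hu => Finset.sum_congr rfl fun x hx => ?_
    -- off the null set, the pair `u, x` is joined exactly when its coin is at most `p`
    have hne : u ≠ x := fun e => Finset.disjoint_left.1 hd hu (e ▸ hx)
    have hwp := b3 u x hne (Finset.mem_filter.1 (hU hu)).2 (Finset.mem_filter.1 (hL hx)).2
    rcases lt_or_gt_of_ne hne with h | h
    · simp [sampleAdj, h, h.le, hwp, Set.indicator_apply]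
    · simp [sampleAdj, h, h.le, not_lt.2 h.le, hsymm (ω.1 x), hwp, Set.indicator_apply]
  refine (measure_mono hsub).trans ((measure_union_le _ _).trans ((add_le_add
    ((measure_union_le _ _).trans (add_le_add ((measure_union_le _ _).trans (add_le_add h1 h2))
      h3.le)) h4).trans (le_of_eq ?_)))
  rw [add_zero, ← ENNReal.ofReal_add (by positivity) (by positivity),
    ← ENNReal.ofReal_add (by positivity) (by positivity)]
  congr 1
  ring

/-- If `w` has a flat region (`w = p` a.e. on `S × T`, with `p ∈ (0,1)` and `S`, `T` of
positive measure), then with exponential probability `Γ*(G) = Ω(n^{-1/2})` for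
`G ∼ 𝔾(n,w)`; the constants depend only on `p` and `min(|S|,|T|)`. -/
theorem flat_graphon_lower_bound (p : ℝ) (hp : p ∈ Set.Ioo (0:ℝ) 1) (s : ℝ) (hs : 0 < s) :
    ∃ c α : ℝ, 0 < c ∧ 0 < α ∧ ∃ N₀ : ℕ,
      ∀ w : ℝ → ℝ → ℝ, IsGraphon w →
      ∀ S T : Set ℝ, MeasurableSet S → MeasurableSet T →
        S ⊆ Icc 0 1 → T ⊆ Icc 0 1 →
        min (volume S).toReal (volume T).toReal = s →
        (∀ᵐ q : ℝ × ℝ ∂(volume.restrict (S ×ˢ T)), w q.1 q.2 = p) →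
        ∀ n : ℕ, N₀ ≤ n →
          1 - Real.exp (-α * n) ≤
            ((graphSampleMeasure n)
              {ω | c * (n : ℝ) ^ (-(1:ℝ)/2) ≤ gammaStar n (sampleAdj w n ω)}).toReal := by
  obtain ⟨hp0, hp1⟩ := hp
  obtain ⟨c, hc, N, hN⟩ := exists_gammaStar_ge p (s / 2) 2 hp0 hp1 (by positivity) (by norm_num)
  obtain ⟨β, hβ⟩ : ∃ β, β = min (s ^ 2 / 2) 6 := ⟨_, rfl⟩
  have hβ0 : 0 < β := by rw [hβ]; exact lt_min (by positivity) (by norm_num)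
  have hβ1 : β ≤ s ^ 2 / 2 := hβ ▸ min_le_left _ _
  have hβ2 : β ≤ 6 := hβ ▸ min_le_right _ _
  -- half of the exponent `β` absorbs the constant factor from the union bound
  refine ⟨c, β / 2, hc, by positivity, max (N + 1) ⌈6 / β⌉₊, ?_⟩
  intro w hwg S T hS hT hS1 hT1 hmin hw n hn
  have hn1 : N + 1 ≤ n := (le_max_left _ _).trans hn
  have hnβ : 3 ≤ β / 2 * n := by
    have h : 6 / β ≤ n := Nat.ceil_le.1 ((le_max_right _ _).trans hn)
    rw [div_le_iff₀ hβ0] at h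
    linarith
  have hbad := measure_bad_le p hp0 hp1 s hs w hwg.2.1 S T hS hT hS1 hT1
    (hmin ▸ min_le_left _ _) (hmin ▸ min_le_right _ _) hw n (by omega)
  obtain ⟨E, hE⟩ : ∃ E : Set ((Fin n → ℝ) × (Fin n → Fin n → ℝ)),
    E = {ω | c * (n : ℝ) ^ (-(1:ℝ)/2) ≤ gammaStar n (sampleAdj w n ω)} := ⟨_, rfl⟩
  rw [← hE]
  have hsub : Eᶜ ⊆ {ω | ¬ ∃ S' T' : Finset (Fin n),
        s / 2 * n ≤ S'.card ∧ s / 2 * n ≤ T'.card ∧ ∀ U ⊆ S', ∀ L ⊆ T', Disjoint U L →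
        |∑ u ∈ U, ∑ x ∈ L, (if sampleAdj w n ω u x = true then (1 : ℝ) else 0)
          - p * (U.card * L.card)| ≤ 2 * (n * √n)} := by
    rintro ω hω ⟨S', T', hS', hT', hdev⟩
    apply hω
    rw [hE]
    exact hN n (by omega) _ S' T' hS' hT' hdev
  have hnum : 2 * Real.exp (-(s ^ 2 / 2 * n)) + 4 ^ n * (2 * Real.exp (-(8 * n)))
      ≤ Real.exp (-(β / 2) * n) := by
    have hn0 : (0 : ℝ) ≤ n := n.cast_nonneg
    have e1 : Real.exp (-(s ^ 2 / 2 * n)) ≤ Real.exp (-(β * n)) :=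
      Real.exp_le_exp.2 (neg_le_neg (mul_le_mul_of_nonneg_right hβ1 hn0))
    have e4 : (4 : ℝ) ≤ Real.exp 2 := by
      have h := Real.exp_one_gt_d9
      have h' : Real.exp 2 = Real.exp 1 * Real.exp 1 := by rw [← Real.exp_add]; norm_num
      rw [h']
      nlinarith
    have e2 : 4 ^ n * Real.exp (-(8 * n)) ≤ Real.exp (-(β * n)) := by
      calc (4 : ℝ) ^ n * Real.exp (-(8 * n))
          ≤ Real.exp 2 ^ n * Real.exp (-(8 * n)) := by gcongr
        _ = Real.exp (-(6 * n)) := by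
          rw [← Real.exp_nat_mul, ← Real.exp_add]
          congr 1
          ring
        _ ≤ Real.exp (-(β * n)) :=
          Real.exp_le_exp.2 (neg_le_neg (mul_le_mul_of_nonneg_right hβ2 hn0))
    have e3 : 4 * Real.exp (-(β / 2 * n)) ≤ 1 := by
      rw [Real.exp_neg, ← div_eq_mul_inv, div_le_one (Real.exp_pos _)]
      linarith [Real.add_one_le_exp (β / 2 * n)]
    have e5 : Real.exp (-(β * n)) = Real.exp (-(β / 2 * n)) * Real.exp (-(β / 2 * n)) := by
      rw [← Real.exp_add]
      congr 1
      ring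
    rw [neg_mul]
    nlinarith [Real.exp_pos (-(β / 2 * n))]
  have htot : (1 : ENNReal) ≤ graphSampleMeasure n E
      + ENNReal.ofReal (Real.exp (-(β / 2) * n)) := by
    rw [← measure_univ (μ := graphSampleMeasure n), ← union_compl_self E]
    exact (measure_union_le _ _).trans (add_le_add le_rfl
      ((measure_mono hsub).trans (hbad.trans (ENNReal.ofReal_le_ofReal hnum))))
  have h := ENNReal.toReal_mono
    (ENNReal.add_ne_top.2 ⟨measure_ne_top _ _, ENNReal.ofReal_ne_top⟩) htot
  rw [ENNReal.toReal_add (measure_ne_top _ _) ENNReal.ofReal_ne_top,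
    ENNReal.toReal_ofReal (Real.exp_pos _).le, ENNReal.toReal_one] at h
  linarith
end
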